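/- Let n ≥ 7 with n ≡ 1 (mod 3). For a generic choice of a linear subspace L ⊂ ℂ^{n+1} of dimension n−3 (codimension 4), of (n−1)(n−2)/6 points l₁,…,l_{(n−1)(n−2)/6} ∈ L, and of (4n+2)/3 points p₁,…,p_{(4n+2)/3} ∈ ℂ^{n+1}, the only homogeneous cubic polynomial in ℂ[x₀,…,xₙ] that is singular at all of the points lᵢ and pⱼ is the zero polynomial. -/

import Mathlib

/-!
A cubic form is the same thing as the symmetric tensor `c` of its third partial derivatives, and
it is singular at `p` exactly when `∑ᵢⱼ cᵢⱼₖ pᵢ pⱼ = 0` for every `k`. The conditions are linear in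
`c` with coefficients polynomial in the points, so "only `c = 0` satisfies them" is a generic
property as soon as it holds for one value of the parameters (`generic_lin`, `generic_sys`).
Everything reduces to one special configuration of points.

Write `n = 3r + 4`. The coordinates are `O`, four coordinates `U b`, and `r` blocks `X i 0`,
`X i 1`, `X i 2`; the subspace `L` is `{U = 0}`. Put `Λᵢ = ⟨O, X i⟩` and
`Mᵢ = ⟨O, U, X i⟩`, of dimensions 4 and 8. The special configuration consists of

* on `L`: the point `O`; four points on every `Λᵢ`; three points on every `Λᵢ + Λⱼ`, `i < j`;
* off `L`: four points on every `Mᵢ`, and six more points on one fixed `M_{i₀}`.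

There are `1 + 4r + 3r(r-1)/2 = (n-1)(n-2)/6` points on `L` and `4r + 6 = (4n+2)/3` points off `L`.
Since `c` is trilinear, it vanishes once it vanishes on all triples of coordinate vectors, and such
a triple lies in some `Λᵢ + Λⱼ + Λₖ`, some `Mᵢ + Mⱼ`, or in `⟨O, U⟩`. The triples are therefore
killed by a finite number of linear systems in at most 11 variables, in this order:

* `sysA`: `c = 0` on `Λᵢ`;
* `SB`: `c = 0` on `Λᵢ + Λⱼ`, given that it vanishes on `Λᵢ` and `Λⱼ`;
* `SC`: `c = 0` on `Λᵢ + Λⱼ + Λₖ`, given that it vanishes on the pairwise sums;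
* `SE`: `c = 0` on `M_{i₀}`, given that it vanishes on `Λ_{i₀}`; hence `c = 0` on `⟨O, U⟩`;
* `SF`: `c = 0` on `Mᵢ`, given that it vanishes on `Λᵢ` and on `⟨O, U⟩`;
* `SD`: `c = 0` on `Mᵢ + Mⱼ`, given that it vanishes on `Λᵢ + Λⱼ`, `Mᵢ` and `Mⱼ`.

`SF` is the delicate one: for `i ≠ i₀` it needs the six extra points to lie on `⟨O, U⟩`, the common
part of all the `Mᵢ`, whereas `SE` needs them spread over `M_{i₀}`. This is resolved by using
genericity a second time. With the six points on `⟨O, U⟩` the whole system is solved modulo the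
vanishing of `c` on `⟨O, U⟩`, so that this relative statement is generic for the six points on
`M_{i₀}` (`gen_rel`); so is the conclusion of `SE` (`gen_SE`), and a parameter value satisfying both
kills `c` (`exists_sys`). Each local system has an explicit solution with small integer
coordinates (`exB` to `exF`).
-/

open MvPolynomial

noncomputable section

/-- The linear form `a₀x₀ + ⋯ + aₙxₙ` with coefficient vector `a`. -/
def linForm {n : ℕ} (a : Fin (n + 1) → ℂ) : MvPolynomial (Fin (n + 1)) ℂ :=
  ∑ i, C (a i) * X i

/-- Evaluation at the point `v`, as a linear map. -/
def evalAt {n : ℕ} (v : Fin (n + 1) → ℂ) : MvPolynomial (Fin (n + 1)) ℂ →ₗ[ℂ] ℂ :=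
  (aeval v).toLinearMap

/-- The linear map `f ↦ (∂f/∂xᵢ)(p)`. -/
def evalPDeriv {n : ℕ} (p : Fin (n + 1) → ℂ) (i : Fin (n + 1)) :
    MvPolynomial (Fin (n + 1)) ℂ →ₗ[ℂ] ℂ :=
  evalAt p ∘ₗ (pderiv i).toLinearMap

/-- `f` is singular at `p`: all partial derivatives of `f` vanish at `p`. -/
def SingularAt {n : ℕ} (f : MvPolynomial (Fin (n + 1)) ℂ) (p : Fin (n + 1) → ℂ) : Prop :=
  ∀ i, evalPDeriv p i f = 0

/-- The space of homogeneous degree-`d` polynomials in `n+1` variables that vanish at every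
point of `V` and are singular at every point of `S`. -/
def SingSpace (n : ℕ) (d : ℕ) (S V : Set (Fin (n + 1) → ℂ)) :
    Submodule ℂ (MvPolynomial (Fin (n + 1)) ℂ) :=
  homogeneousSubmodule (Fin (n + 1)) ℂ d ⊓ (⨅ v ∈ V, LinearMap.ker (evalAt v)) ⊓
    ⨅ p ∈ S, ⨅ i, LinearMap.ker (evalPDeriv p i)

/-- A property of parameters `t : ι → ℂ` holds for a generic choice of `t` if there is a
nonzero polynomial `F` in the variables `ι` such that the property holds whenever
`F(t) ≠ 0`. -/
def Generic {ι : Type} [Fintype ι] (P : (ι → ℂ) → Prop) : Prop :=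
  ∃ F : MvPolynomial ι ℂ, F ≠ 0 ∧ ∀ t : ι → ℂ, eval t F ≠ 0 → P t

end

set_option linter.unusedSimpArgs false

/-! ### Symmetric tensors and linear systems -/

/-- The tensor `c` is symmetric in its three indices. -/
def Symm3 {ι : Type} (c : ι → ι → ι → ℂ) : Prop :=
  (∀ i j k, c i j k = c j i k) ∧ ∀ i j k, c i j k = c i k j

/-- The `k`-th component of the contraction of `c` twice with `p`; for the tensor of third partial
derivatives of a cubic form `f` it is `2 ∂f/∂xₖ (p)`. -/
def D {ι : Type} [Fintype ι] (c : ι → ι → ι → ℂ) (p : ι → ℂ) (k : ι) : ℂ :=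
  ∑ i, ∑ j, c i j k * p i * p j

/-- The vector with coordinates `w` on the basis vectors indexed by `g`, for instance
`emb ![1, 3] ![a, b] = a e₁ + b e₃`. When `g` is not injective the coordinates are added up. -/
def emb {κ ι : Type} [Fintype κ] [DecidableEq ι] (g : κ → ι) (w : κ → ℂ) : ι → ℂ :=
  fun i => ∑ m, if g m = i then w m else 0

lemma D_emb {κ ι : Type} [Fintype κ] [Fintype ι] [DecidableEq ι] (g : κ → ι) (w : κ → ℂ)
    (c : ι → ι → ι → ℂ) (k : ι) :
    D c (emb g w) k = ∑ m, ∑ m', c (g m) (g m') k * w m * w m' := by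
  have key : ∀ F : ι → ℂ, ∑ i, F i * emb g w i = ∑ m, F (g m) * w m := by
    intro F
    simp only [emb, Finset.mul_sum]
    rw [Finset.sum_comm]
    simp
  unfold D
  have h1 : ∀ i, ∑ j, c i j k * emb g w i * emb g w j
      = (∑ m', c i (g m') k * w m') * emb g w i := by
    intro i
    have := key (fun j => c i j k * emb g w i)
    rw [this, Finset.sum_mul]
    exact Finset.sum_congr rfl fun _ _ => by ring
  simp_rw [h1]
  rw [key]
  exact Finset.sum_congr rfl fun m _ => by
    rw [Finset.sum_mul]; exact Finset.sum_congr rfl fun _ _ => by ring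

lemma emb_emb {κ' κ ι : Type} [Fintype κ] [Fintype κ'] [DecidableEq κ] [DecidableEq ι]
    (g : κ' → κ) (e : κ → ι) (w : κ' → ℂ) : emb e (emb g w) = emb (e ∘ g) w := by
  funext i
  simp only [emb]
  have : ∀ m : κ, (if e m = i then ∑ m', (if g m' = m then w m' else 0) else 0)
      = ∑ m', if g m' = m then (if e m = i then w m' else 0) else 0 := by
    intro m; split_ifs with h <;> simp
  simp_rw [this]
  rw [Finset.sum_comm]
  simp

/-- The linear system for a symmetric tensor `c` stating that `c` vanishes on the triples in `zero`
and that the corresponding cubic is singular at all the points `pts` has only the zero solution. -/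
def Sys {κ α : Type} [Fintype κ] (pts : α → κ → ℂ) (zero : κ → κ → κ → Prop) : Prop :=
  ∀ c : κ → κ → κ → ℂ, Symm3 c → (∀ i j k, zero i j k → c i j k = 0) →
    (∀ s k, D c (pts s) k = 0) → ∀ i j k, c i j k = 0

/-- A system solved on a coordinate subspace applies to the restriction of a larger tensor. -/
lemma Sys.pull {κ ι α : Type} [Fintype κ] [Fintype ι] [DecidableEq ι] [DecidableEq κ]
    {pts : α → κ → ℂ} {zero : κ → κ → κ → Prop} (h : Sys pts zero) (e : κ → ι)
    {c : ι → ι → ι → ℂ} (hc : Symm3 c)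
    (hz : ∀ i j k, zero i j k → c (e i) (e j) (e k) = 0)
    (hD : ∀ s k, D c (emb e (pts s)) k = 0) (i j k : κ) : c (e i) (e j) (e k) = 0 := by
  refine h (fun i j k => c (e i) (e j) (e k)) ⟨fun _ _ _ => hc.1 _ _ _, fun _ _ _ => hc.2 _ _ _⟩
    hz (fun s k => ?_) i j k
  rw [← hD s (e k), D_emb]; rfl

/-- All three indices lie in the coordinate subspace spanned by the indices `g`. -/
def inR {κ' κ : Type} (g : κ' → κ) (i j k : κ) : Prop :=
  i ∈ Set.range g ∧ j ∈ Set.range g ∧ k ∈ Set.range g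

/-- Four points of `ℂ⁴` that form, together with the first basis vector, a projective frame. -/
def pts4 : Fin 4 → Fin 4 → ℂ := ![![0,1,0,0],![0,0,1,0],![0,0,0,1],![1,1,1,1]]

/-! ### Generic properties and openness of injectivity -/

lemma Generic.mono {τ : Type} [Fintype τ] {P Q : (τ → ℂ) → Prop} (h : Generic P)
    (hPQ : ∀ t, P t → Q t) : Generic Q :=
  let ⟨F, hF, h'⟩ := h
  ⟨F, hF, fun t ht => hPQ t (h' t ht)⟩

lemma Generic.forall {τ β : Type} [Fintype τ] [Finite β] {P : β → (τ → ℂ) → Prop}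
    (h : ∀ b, Generic (P b)) : Generic fun t => ∀ b, P b t := by
  cases nonempty_fintype β
  choose F hF h' using h
  refine ⟨∏ b, F b, Finset.prod_ne_zero_iff.2 fun b _ => hF b, fun t ht b => h' b t ?_⟩
  rw [map_prod] at ht
  exact Finset.prod_ne_zero_iff.1 ht b (Finset.mem_univ b)

lemma Generic.and {τ : Type} [Fintype τ] {P Q : (τ → ℂ) → Prop} (hP : Generic P)
    (hQ : Generic Q) : Generic fun t => P t ∧ Q t := by
  obtain ⟨F, hF, h⟩ := hP
  obtain ⟨G, hG, h'⟩ := hQ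
  refine ⟨F * G, mul_ne_zero hF hG, fun t ht => ?_⟩
  rw [map_mul] at ht
  exact ⟨h t (left_ne_zero_of_mul ht), h' t (right_ne_zero_of_mul ht)⟩

/-- A nonzero polynomial over an infinite field has a nonvanishing point. -/
lemma Generic.exists {τ : Type} [Fintype τ] {P : (τ → ℂ) → Prop} (h : Generic P) : ∃ t, P t := by
  obtain ⟨F, hF, h⟩ := h
  by_contra! hn
  exact hF (MvPolynomial.funext fun t => by
    rw [map_zero]; exact not_not.1 fun h0 => hn t (h t h0))

/-- The function `f` of the parameters is given by a polynomial. -/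
def PolyFn {τ : Type} (f : (τ → ℂ) → ℂ) : Prop := ∃ P : MvPolynomial τ ℂ, ∀ t, f t = eval t P

lemma PolyFn.const {τ : Type} (a : ℂ) : PolyFn fun _ : τ → ℂ => a := ⟨C a, by simp⟩

lemma PolyFn.var {τ : Type} (i : τ) : PolyFn fun t : τ → ℂ => t i := ⟨X i, by simp⟩

lemma PolyFn.mul {τ : Type} {f g : (τ → ℂ) → ℂ} (hf : PolyFn f) (hg : PolyFn g) :
    PolyFn fun t => f t * g t := by
  obtain ⟨P, hP⟩ := hf
  obtain ⟨Q, hQ⟩ := hg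
  exact ⟨P * Q, by simp [hP, hQ]⟩

lemma PolyFn.sum {τ β : Type} [Fintype β] {f : β → (τ → ℂ) → ℂ} (hf : ∀ b, PolyFn (f b)) :
    PolyFn fun t => ∑ b, f b t := by
  choose P hP using hf
  exact ⟨∑ b, P b, by simp [hP]⟩

lemma PolyFn.emb {τ κ ι : Type} [Fintype κ] [DecidableEq ι] (g : κ → ι) {w : (τ → ℂ) → κ → ℂ}
    (hw : ∀ m, PolyFn fun t => w t m) (i : ι) : PolyFn fun t => _root_.emb g (w t) i :=
  PolyFn.sum fun m => by
    by_cases h : g m = i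
    · simpa [h] using hw m
    · simpa [h] using PolyFn.const 0

/-- The function `f` is linear in `x`, with coefficients that are polynomials in the
parameters. -/
def PolyLin {τ σ : Type} [Fintype σ] (f : (τ → ℂ) → (σ → ℂ) → ℂ) : Prop :=
  ∃ G : σ → MvPolynomial τ ℂ, ∀ t x, f t x = ∑ s, eval t (G s) * x s

lemma PolyLin.coord {τ σ : Type} [Fintype σ] (a : σ) :
    PolyLin fun (_ : τ → ℂ) (x : σ → ℂ) => x a := by
  classical
  exact ⟨fun s => if s = a then 1 else 0, fun t x => by simp [apply_ite]⟩

lemma PolyLin.sum {τ σ β : Type} [Fintype σ] [Fintype β] {f : β → (τ → ℂ) → (σ → ℂ) → ℂ}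
    (hf : ∀ b, PolyLin (f b)) : PolyLin fun t x => ∑ b, f b t x := by
  choose G hG using hf
  refine ⟨fun s => ∑ b, G b s, fun t x => ?_⟩
  simp_rw [hG, map_sum, Finset.sum_mul]
  exact Finset.sum_comm

lemma PolyLin.mul {τ σ : Type} [Fintype σ] {f : (τ → ℂ) → (σ → ℂ) → ℂ} {g : (τ → ℂ) → ℂ}
    (hf : PolyLin f) (hg : PolyFn g) : PolyLin fun t x => f t x * g t := by
  obtain ⟨G, hG⟩ := hf
  obtain ⟨P, hP⟩ := hg
  refine ⟨fun s => G s * P, fun t x => ?_⟩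
  simp_rw [hG, hP, map_mul, Finset.sum_mul]
  exact Finset.sum_congr rfl fun _ _ => by ring

lemma PolyLin.sub {τ σ : Type} [Fintype σ] {f g : (τ → ℂ) → (σ → ℂ) → ℂ}
    (hf : PolyLin f) (hg : PolyLin g) : PolyLin fun t x => f t x - g t x := by
  obtain ⟨G, hG⟩ := hf
  obtain ⟨P, hP⟩ := hg
  refine ⟨fun s => G s - P s, fun t x => ?_⟩
  simp_rw [hG, hP, map_sub, sub_mul, Finset.sum_sub_distrib]

/-- Openness of full column rank: if a linear system depending polynomially on parameters has
only the trivial solution for one value of the parameters, then so it does generically.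
With `N` a left inverse of the matrix `M(t₀)`, the polynomial `det (N * M(t))` does not vanish
at `t₀`, and wherever it does not vanish `M(t)` is injective. -/
lemma generic_lin {τ σ ρ : Type} [Fintype τ] [Fintype σ] [Finite ρ]
    {f : ρ → (τ → ℂ) → (σ → ℂ) → ℂ} (hf : ∀ r, PolyLin (f r)) (t₀ : τ → ℂ)
    (h₀ : ∀ x, (∀ r, f r t₀ x = 0) → x = 0) : Generic fun t => ∀ x, (∀ r, f r t x = 0) → x = 0 := by
  classical
  cases nonempty_fintype ρ
  choose G hG using hf
  let M : (τ → ℂ) → Matrix ρ σ ℂ := fun t => Matrix.of fun r s => eval t (G r s)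
  have hM : ∀ t x r, f r t x = (M t).mulVec x r := fun t x r => hG r t x
  have hinj : LinearMap.ker (Matrix.toLin' (M t₀)) = ⊥ := by
    rw [LinearMap.ker_eq_bot']
    intro x hx
    refine h₀ x fun r => ?_
    rw [hM]
    exact congrFun hx r
  obtain ⟨g, hg⟩ := LinearMap.exists_leftInverse_of_injective _ hinj
  let N : Matrix σ ρ ℂ := LinearMap.toMatrix' g
  have hN : N * M t₀ = 1 := by
    have := congrArg LinearMap.toMatrix' hg
    rwa [LinearMap.toMatrix'_comp, LinearMap.toMatrix'_toLin', LinearMap.toMatrix'_id] at this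
  let F : MvPolynomial τ ℂ := (Matrix.of fun s s' => ∑ r, C (N s r) * G r s').det
  have hF : ∀ t, eval t F = (N * M t).det := by
    intro t
    rw [RingHom.map_det]
    congr 1
    ext s s'
    simp [Matrix.mul_apply, M]
  refine ⟨F, fun h => ?_, fun t ht x hx => ?_⟩
  · have := hF t₀
    rw [h, hN] at this
    simp at this
  · refine Matrix.eq_zero_of_mulVec_eq_zero (hF t ▸ ht) ?_
    rw [← Matrix.mulVec_mulVec]
    have : (M t).mulVec x = 0 := by
      funext r
      rw [← hM]
      exact hx r
    rw [this, Matrix.mulVec_zero]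

/-- If a system with points depending polynomially on the parameters has only the zero solution for
one value of the parameters, then so it does generically. -/
lemma generic_sys {τ κ α : Type} [Fintype τ] [Fintype κ] [Finite α] {pts : (τ → ℂ) → α → κ → ℂ}
    {zero : κ → κ → κ → Prop} (hp : ∀ s i, PolyFn fun t => pts t s i) (t₀ : τ → ℂ)
    (h₀ : Sys (pts t₀) zero) : Generic fun t => Sys (pts t) zero := by
  let f : ((κ × κ × κ) ⊕ (κ × κ × κ) ⊕ {m : κ × κ × κ // zero m.1 m.2.1 m.2.2} ⊕ (α × κ)) →
      (τ → ℂ) → (κ × κ × κ → ℂ) → ℂ := fun r t x => match r with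
    | .inl (i, j, k) => x (i, j, k) - x (j, i, k)
    | .inr (.inl (i, j, k)) => x (i, j, k) - x (i, k, j)
    | .inr (.inr (.inl m)) => x m
    | .inr (.inr (.inr (s, k))) => ∑ i, ∑ j, x (i, j, k) * pts t s i * pts t s j
  have hf : ∀ r, PolyLin (f r) := by
    rintro (⟨i, j, k⟩ | ⟨i, j, k⟩ | m | ⟨s, k⟩)
    · exact (PolyLin.coord _).sub (PolyLin.coord _)
    · exact (PolyLin.coord _).sub (PolyLin.coord _)
    · exact PolyLin.coord _
    · exact PolyLin.sum fun i => PolyLin.sum fun j => ((PolyLin.coord _).mul (hp s i)).mul (hp s j)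
  have key : ∀ t, Sys (pts t) zero ↔ ∀ x, (∀ r, f r t x = 0) → x = 0 := by
    intro t
    constructor
    · intro h x hx
      funext ⟨i, j, k⟩
      exact h (fun i j k => x (i, j, k))
        ⟨fun i j k => sub_eq_zero.1 (hx (.inl (i, j, k))),
          fun i j k => sub_eq_zero.1 (hx (.inr (.inl (i, j, k))))⟩
        (fun i j k hz => hx (.inr (.inr (.inl ⟨(i, j, k), hz⟩))))
        (fun s k => hx (.inr (.inr (.inr (s, k))))) i j k
    · intro h c hc hz hD i j k
      have := h (fun m => c m.1 m.2.1 m.2.2) (by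
        rintro (⟨i, j, k⟩ | ⟨i, j, k⟩ | m | ⟨s, k⟩)
        · exact sub_eq_zero.2 (hc.1 i j k)
        · exact sub_eq_zero.2 (hc.2 i j k)
        · exact hz _ _ _ m.2
        · exact hD s k)
      exact congrFun this (i, j, k)
  exact (generic_lin hf t₀ ((key t₀).1 h₀)).mono fun t h => (key t).2 h

/-! ### From cubic forms to symmetric tensors -/

lemma pderiv_comm {σ : Type} (i j : σ) (f : MvPolynomial σ ℂ) :
    pderiv i (pderiv j f) = pderiv j (pderiv i f) := by
  classical
  let d (i : σ) : Derivation ℂ (MvPolynomial σ ℂ) (MvPolynomial σ ℂ) := pderiv i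
  have h : ⁅d i, d j⁆ = 0 := by
    refine MvPolynomial.derivation_ext fun k => ?_
    rw [Derivation.commutator_apply]
    simp [d, pderiv_X, Pi.single_apply, apply_ite]
  have h' : ⁅d i, d j⁆ f = 0 := by rw [h]; rfl
  rw [Derivation.commutator_apply] at h'
  exact sub_eq_zero.1 h'

/-- A cubic form corresponds to the symmetric tensor of its third partial derivatives; by Euler's
identity `2 ∂f/∂xₖ (p) = ∑ᵢⱼ cᵢⱼₖ pᵢ pⱼ`, and `f = 0` as soon as the tensor vanishes. -/
lemma cubic_eq_zero {σ α : Type} [Fintype σ] {pts : α → σ → ℂ} (h : Sys pts fun _ _ _ => False)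
    (f : MvPolynomial σ ℂ) (hf : f.IsHomogeneous 3) (hs : ∀ s k, eval (pts s) (pderiv k f) = 0) :
    f = 0 := by
  have h1 : ∀ k, (pderiv k f).IsHomogeneous 2 := fun k => hf.pderiv
  have h2 : ∀ j k, (pderiv j (pderiv k f)).IsHomogeneous 1 := fun j k => (h1 k).pderiv
  have h3 : ∀ i j k, (pderiv i (pderiv j (pderiv k f))).IsHomogeneous 0 := fun i j k =>
    (h2 j k).pderiv
  let c : σ → σ → σ → ℂ := fun i j k => coeff 0 (pderiv i (pderiv j (pderiv k f)))
  have hc3 : ∀ i j k, pderiv i (pderiv j (pderiv k f)) = C (c i j k) := fun i j k =>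
    (totalDegree_eq_zero_iff_eq_C).1 (by
      simpa using (h3 i j k).totalDegree_le)
  have e2 : ∀ j k, pderiv j (pderiv k f) = ∑ i, X i * C (c i j k) := fun j k => by
    have := (h2 j k).sum_X_mul_pderiv
    simp only [hc3, one_smul] at this
    exact this.symm
  have e1 : ∀ k, ∑ j, X j * ∑ i, X i * C (c i j k) = 2 • pderiv k f := fun k => by
    have := (h1 k).sum_X_mul_pderiv
    simpa only [e2] using this
  have hc : ∀ i j k, c i j k = 0 := by
    refine h c ⟨fun i j k => ?_, fun i j k => ?_⟩ (fun _ _ _ h => h.elim) fun s k => ?_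
    · simp only [c]; rw [pderiv_comm]
    · simp only [c]; rw [pderiv_comm j k]
    · have := congrArg (eval (pts s)) (e1 k)
      simp only [map_sum, map_mul, eval_X, eval_C, map_nsmul, hs, smul_zero] at this
      rw [← this, D, Finset.sum_comm]
      refine Finset.sum_congr rfl fun j _ => ?_
      rw [Finset.mul_sum]
      exact Finset.sum_congr rfl fun i _ => by ring
  have hk : ∀ k, pderiv k f = 0 := fun k => by
    have := e1 k
    simp only [hc, map_zero, mul_zero, Finset.sum_const_zero] at this
    simpa using this.symm
  have := hf.sum_X_mul_pderiv
  simp only [hk, mul_zero, Finset.sum_const_zero] at this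
  simpa using this.symm

/-! ### The local systems -/

/-- The system on `Λᵢ + Λⱼ`, with index `0` for `O`, `1, 2, 3` for `X i`, and `4, 5, 6` for `X j`;
`w` are the three points on `Λᵢ + Λⱼ`. -/
def SB (w : Fin 3 → Fin 7 → ℂ) : Prop :=
  Sys (Sum.elim (fun b => emb (![0,1,2,3] : Fin 4 → Fin 7) (pts4 b))
    (Sum.elim (fun b => emb (![0,4,5,6] : Fin 4 → Fin 7) (pts4 b)) w))
    fun i j k => inR (![0,1,2,3] : Fin 4 → Fin 7) i j k ∨ inR (![0,4,5,6] : Fin 4 → Fin 7) i j k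

/-- The system on `Λ₁ + Λ₂ + Λ₃`, with index `0` for `O` and three consecutive indices for each
block; `wᵢⱼ` are the three points on `Λᵢ + Λⱼ`. -/
def SC (w12 w13 w23 : Fin 3 → Fin 7 → ℂ) : Prop :=
  Sys (Sum.elim (fun a => emb (![0,1,2,3,4,5,6] : Fin 7 → Fin 10) (w12 a))
    (Sum.elim (fun a => emb (![0,1,2,3,7,8,9] : Fin 7 → Fin 10) (w13 a))
      (fun a => emb (![0,4,5,6,7,8,9] : Fin 7 → Fin 10) (w23 a))))
    fun i j k => inR (![0,1,2,3,4,5,6] : Fin 7 → Fin 10) i j k ∨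
      inR (![0,1,2,3,7,8,9] : Fin 7 → Fin 10) i j k ∨ inR (![0,4,5,6,7,8,9] : Fin 7 → Fin 10) i j k

/-- The system on `Mᵢ + Mⱼ`, with index `0` for `O`, `1` to `4` for `U`, `5, 6, 7` for `X i`, and
`8, 9, 10` for `X j`; `w` are the points on `Λᵢ + Λⱼ`, while `p`, `p'` are those on `Mᵢ`, `Mⱼ`. -/
def SD (w : Fin 3 → Fin 7 → ℂ) (p p' : Fin 4 → Fin 8 → ℂ) : Prop :=
  Sys (Sum.elim (fun a => emb (![0,5,6,7,8,9,10] : Fin 7 → Fin 11) (w a))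
    (Sum.elim (fun b => emb (![0,1,2,3,4,5,6,7] : Fin 8 → Fin 11) (p b))
      (fun b => emb (![0,1,2,3,4,8,9,10] : Fin 8 → Fin 11) (p' b))))
    fun i j k => inR (![0,5,6,7,8,9,10] : Fin 7 → Fin 11) i j k ∨
      inR (![0,1,2,3,4,5,6,7] : Fin 8 → Fin 11) i j k ∨
      inR (![0,1,2,3,4,8,9,10] : Fin 8 → Fin 11) i j k

/-- The system on `M_{i₀}`, with index `0` for `O`, `1` to `4` for `U`, and `5, 6, 7` for `X i₀`;
`p` are the four points on `M_{i₀}` and `q` the six additional ones. -/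
def SE (p : Fin 4 → Fin 8 → ℂ) (q : Fin 6 → Fin 8 → ℂ) : Prop :=
  Sys (Sum.elim (fun _ : Unit => emb (![0] : Fin 1 → Fin 8) ![1])
    (Sum.elim (fun b => emb (![0,5,6,7] : Fin 4 → Fin 8) (pts4 b)) (Sum.elim p q)))
    fun i j k => inR (![0,5,6,7] : Fin 4 → Fin 8) i j k

/-- The system on `Mᵢ`, indexed as in `SE`, with the six points `q` lying on `⟨O, U⟩` and the tensor
vanishing on `⟨O, U⟩`. -/
def SF (p : Fin 4 → Fin 8 → ℂ) (q : Fin 6 → Fin 5 → ℂ) : Prop :=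
  Sys (Sum.elim (fun b => emb (![0,5,6,7] : Fin 4 → Fin 8) (pts4 b))
    (Sum.elim p (fun a => emb (![0,1,2,3,4] : Fin 5 → Fin 8) (q a))))
    fun i j k => inR (![0,5,6,7] : Fin 4 → Fin 8) i j k ∨ inR (![0,1,2,3,4] : Fin 5 → Fin 8) i j k

/-! ### Solutions of the local systems -/

lemma forall4 {P : Fin 4 → Prop} : (∀ k, P k) ↔ P 0 ∧ P 1 ∧ P 2 ∧ P 3 := by
  simp [Fin.forall_fin_succ]

lemma forall7 {P : Fin 7 → Prop} : (∀ k, P k) ↔ P 0 ∧ P 1 ∧ P 2 ∧ P 3 ∧ P 4 ∧ P 5 ∧ P 6 := by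
  simp [Fin.forall_fin_succ]

lemma forall8 {P : Fin 8 → Prop} :
    (∀ k, P k) ↔ P 0 ∧ P 1 ∧ P 2 ∧ P 3 ∧ P 4 ∧ P 5 ∧ P 6 ∧ P 7 := by
  simp [Fin.forall_fin_succ]

lemma forall10 {P : Fin 10 → Prop} :
    (∀ k, P k) ↔ P 0 ∧ P 1 ∧ P 2 ∧ P 3 ∧ P 4 ∧ P 5 ∧ P 6 ∧ P 7 ∧ P 8 ∧ P 9 := by
  simp [Fin.forall_fin_succ]

lemma forall11 {P : Fin 11 → Prop} :
    (∀ k, P k) ↔ P 0 ∧ P 1 ∧ P 2 ∧ P 3 ∧ P 4 ∧ P 5 ∧ P 6 ∧ P 7 ∧ P 8 ∧ P 9 ∧ P 10 := by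
  simp [Fin.forall_fin_succ]

lemma sorted_zero {N : ℕ} {c : Fin N → Fin N → Fin N → ℂ} (hc : Symm3 c)
    (h : ∀ i j k, i ≤ j → j ≤ k → c i j k = 0) : ∀ i j k, c i j k = 0 := by
  intro i j k
  obtain ⟨h1, h2⟩ := hc
  rcases le_total i j with a | a <;> rcases le_total j k with b | b <;>
    rcases le_total i k with d | d <;> grind

/-- A symmetric tensor vanishes if it does on the sorted triples selected by `z` and on those of
the list `l`, which must contain all the others. -/
lemma sorted_zero_list {N : ℕ} {c : Fin N → Fin N → Fin N → ℂ} (hc : Symm3 c)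
    (z : Fin N → Fin N → Fin N → Bool) (hz : ∀ i j k, i ≤ j → j ≤ k → z i j k → c i j k = 0)
    (l : List (Fin N × Fin N × Fin N)) (hl : l.Forall fun m => c m.1 m.2.1 m.2.2 = 0)
    (hd : ∀ i j k, i ≤ j → j ≤ k → z i j k = false → (i, j, k) ∈ l) : ∀ i j k, c i j k = 0 := by
  apply sorted_zero hc
  intro i j k h1 h2
  by_cases hh : z i j k
  · exact hz i j k h1 h2 hh
  · rw [List.forall_iff_forall_mem] at hl
    exact hl (i, j, k) (hd i j k h1 h2 (by simpa using hh))

/-- Five general points of `ℙ³`: the only cubic singular at all of them is zero. The four coordinate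
points kill all `cᵢᵢₖ`, and the sum of the basis vectors kills the four `cᵢⱼₖ` with `i < j < k`. -/
lemma sysA : Sys (Sum.elim (fun _ : Unit => emb (![0] : Fin 1 → Fin 4) ![1]) pts4)
    fun _ _ _ => False := by
  intro c hc hz hD
  have s1 : ∀ i j k, j < i → c i j k = c j i k := fun i j k _ => hc.1 i j k
  have s2 : ∀ i j k, k < j → c i j k = c i k j := fun i j k _ => hc.2 i j k
  have d0 : ∀ k, c 0 0 k = 0 := fun k => by simpa [D_emb, pts4] using hD (.inl ()) k
  have d1 : ∀ k, c 1 1 k = 0 := fun k => by simpa [D, Fin.sum_univ_four, pts4] using hD (.inr 0) k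
  have d2 : ∀ k, c 2 2 k = 0 := fun k => by simpa [D, Fin.sum_univ_four, pts4] using hD (.inr 1) k
  have d3 : ∀ k, c 3 3 k = 0 := fun k => by simpa [D, Fin.sum_univ_four, pts4] using hD (.inr 2) k
  have dd1 : ∀ i k, c i i k = 0 := by
    intro i; fin_cases i <;> assumption
  have dd2 : ∀ i k, c i k k = 0 := fun i k => by rw [hc.1, hc.2]; exact dd1 k i
  have p0 : ∀ k, _ := fun k => hD (.inr 3) k
  simp [D, pts4, Fin.sum_univ_four, dd1] at p0
  clear hD
  simp only [forall4, s1, s2, dd1, dd2, Fin.reduceLT, Fin.reduceLE, Fin.isValue,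
    add_zero, zero_add, neg_zero, true_and, and_true] at p0
  refine sorted_zero_list hc (fun i j k => i == j || j == k) ?_
    [(0, 1, 2), (0, 1, 3), (0, 2, 3), (1, 2, 3)] ?_ (by decide)
  · intro i j k h1 h2 h3
    simp only [Bool.or_eq_true, beq_iff_eq] at h3
    rcases h3 with rfl | rfl
    · exact dd1 _ _
    · exact dd2 _ _
  simp only [List.Forall]
  clear hc hz s1 s2 dd1 dd2
  grind

set_option maxHeartbeats 4000000 in
/-- Solution of `SB`: three points on `Λᵢ + Λⱼ`. The coordinate points kill all `cᵢᵢₖ`,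
  and singularity
at the three points is a linear system in the remaining mixed coefficients. -/
lemma exB : ∃ w, SB w := by
  refine ⟨![emb ![1,2,5,6] ![-1,1,1,2], emb ![0,1,3,4,6] ![1,-1,-1,-1,-1],
    emb ![2,3,4,5] ![1,-1,1,1]], ?_⟩
  intro c hc hz hD
  have s1 : ∀ i j k, j < i → c i j k = c j i k := fun i j k _ => hc.1 i j k
  have s2 : ∀ i j k, k < j → c i j k = c i k j := fun i j k _ => hc.2 i j k
  have z1 : ∀ i j k, k ≤ 3 → i ≤ j → j ≤ k → c i j k = 0 := by
    intro i j k h0 h1 h2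
    refine hz i j k (Or.inl ?_)
    revert i j k; unfold inR; decide
  have z2 : ∀ i j k, 4 ≤ i → i ≤ j → j ≤ k → c i j k = 0 := by
    intro i j k h0 h1 h2
    refine hz i j k (Or.inr ?_)
    revert i j k; unfold inR; decide
  have z3 : ∀ j k, 4 ≤ j → j ≤ k → c 0 j k = 0 := by
    intro j k h0 h1
    refine hz 0 j k (Or.inr ?_)
    revert j k; unfold inR; decide
  have d0 : ∀ k, c 0 0 k = 0 := fun k => hz _ _ _ (by revert k; unfold inR; decide)
  have d1 : ∀ k, c 1 1 k = 0 := fun k =>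
    by simpa [D_emb, emb_emb, Fin.sum_univ_succ, pts4] using hD (.inl 0) k
  have d2 : ∀ k, c 2 2 k = 0 := fun k =>
    by simpa [D_emb, emb_emb, Fin.sum_univ_succ, pts4] using hD (.inl 1) k
  have d3 : ∀ k, c 3 3 k = 0 := fun k =>
    by simpa [D_emb, emb_emb, Fin.sum_univ_succ, pts4] using hD (.inl 2) k
  have d4 : ∀ k, c 4 4 k = 0 := fun k =>
    by simpa [D_emb, emb_emb, Fin.sum_univ_succ, pts4] using hD (.inr (.inl 0)) k
  have d5 : ∀ k, c 5 5 k = 0 := fun k =>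
    by simpa [D_emb, emb_emb, Fin.sum_univ_succ, pts4] using hD (.inr (.inl 1)) k
  have d6 : ∀ k, c 6 6 k = 0 := fun k =>
    by simpa [D_emb, emb_emb, Fin.sum_univ_succ, pts4] using hD (.inr (.inl 2)) k
  have dd1 : ∀ i k, c i i k = 0 := by
    intro i; fin_cases i <;> assumption
  have dd2 : ∀ i k, c i k k = 0 := fun i k => by rw [hc.1, hc.2]; exact dd1 k i
  have p0 : ∀ k, _ := fun k => hD (.inl 3) k
  have p1 : ∀ k, _ := fun k => hD (.inr (.inl 3)) k
  have p2 : ∀ k, _ := fun k => hD (.inr (.inr 0)) k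
  have p3 : ∀ k, _ := fun k => hD (.inr (.inr 1)) k
  have p4 : ∀ k, _ := fun k => hD (.inr (.inr 2)) k
  simp [D_emb, emb_emb, pts4, Fin.sum_univ_succ, dd1, s1] at p0 p1 p2 p3 p4
  clear hD
  simp only [forall7, s1, s2, dd1, dd2, z1,z2,z3, Fin.reduceLT, Fin.reduceLE, Fin.isValue,
    add_zero, zero_add, neg_zero, true_and, and_true] at p0 p1 p2 p3 p4
  refine sorted_zero_list hc
    (fun i j k => i == j || j == k || k ≤ 3 || 4 ≤ i || (i == 0 && 4 ≤ j)) ?_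
    [(0, 1, 4), (0, 1, 5), (0, 1, 6), (0, 2, 4), (0, 2, 5), (0, 2, 6), (0, 3, 4), (0, 3, 5),
      (0, 3, 6), (1, 2, 4), (1, 2, 5), (1, 2, 6), (1, 3, 4), (1, 3, 5), (1, 3, 6), (1, 4, 5),
      (1, 4, 6), (1, 5, 6), (2, 3, 4), (2, 3, 5), (2, 3, 6), (2, 4, 5), (2, 4, 6), (2, 5, 6),
      (3, 4, 5), (3, 4, 6), (3, 5, 6)] ?_ (by decide)
  · intro i j k h1 h2 h3
    simp only [Bool.or_eq_true, Bool.and_eq_true, beq_iff_eq, decide_eq_true_eq] at h3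
    rcases h3 with (((rfl | rfl) | h) | h) | ⟨rfl, h⟩
    · exact dd1 _ _
    · exact dd2 _ _
    · exact z1 _ _ _ h h1 h2
    · exact z2 _ _ _ h h1 h2
    · exact z3 _ _ h h2
  simp only [List.Forall]
  clear hc hz s1 s2 dd1 dd2 z1 z2 z3
  grind (splits := 37)

set_option maxHeartbeats 4000000 in
/-- Solution of `SC`; the unknowns left are the `27` coefficients with one index in each block. -/
lemma exC : ∃ w12 w13 w23, SC w12 w13 w23 := by
  refine ⟨![emb ![1,2,4] ![1,1,2], emb ![1,5,6] ![1,-1,-1], emb ![2,6] ![1,2]],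
    ![emb ![1,2,4] ![2,-1,-1], emb ![3,4] ![2,-1], emb ![3,5,6] ![-1,1,1]],
    ![emb ![1,2,5] ![1,1,-1], emb ![2,5,6] ![1,2,-1], emb ![1,3,6] ![-1,1,1]], ?_⟩
  intro c hc hz hD
  have s1 : ∀ i j k, j < i → c i j k = c j i k := fun i j k _ => hc.1 i j k
  have s2 : ∀ i j k, k < j → c i j k = c i k j := fun i j k _ => hc.2 i j k
  have z1 : ∀ i j k, k ≤ 6 → i ≤ j → j ≤ k → c i j k = 0 := by
    intro i j k h0 h1 h2
    refine hz i j k (?_)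
    revert i j k; unfold inR; decide
  have z2 : ∀ i j k, 4 ≤ i → i ≤ j → j ≤ k → c i j k = 0 := by
    intro i j k h0 h1 h2
    refine hz i j k (?_)
    revert i j k; unfold inR; decide
  have z3 : ∀ j k, 4 ≤ j → j ≤ k → c 0 j k = 0 := by
    intro j k h0 h1
    refine hz 0 j k (?_)
    revert j k; unfold inR; decide
  have z4 : ∀ i j k, j ≤ 3 → 7 ≤ k → i ≤ j → j ≤ k → c i j k = 0 := by
    intro i j k h0 h1 h2 h3
    refine hz i j k (?_)
    revert i j k; unfold inR; decide
  have z5 : ∀ i j k, i ≤ 3 → 7 ≤ j → i ≤ j → j ≤ k → c i j k = 0 := by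
    intro i j k h0 h1 h2 h3
    refine hz i j k (?_)
    revert i j k; unfold inR; decide
  have dd1 : ∀ i k, c i i k = 0 := fun i k => hz _ _ _ (by revert i k; unfold inR; decide)
  have dd2 : ∀ i k, c i k k = 0 := fun i k => by rw [hc.1, hc.2]; exact dd1 k i
  have p0 : ∀ k, _ := fun k => hD (.inl 0) k
  have p1 : ∀ k, _ := fun k => hD (.inl 1) k
  have p2 : ∀ k, _ := fun k => hD (.inl 2) k
  have p3 : ∀ k, _ := fun k => hD (.inr (.inl 0)) k
  have p4 : ∀ k, _ := fun k => hD (.inr (.inl 1)) k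
  have p5 : ∀ k, _ := fun k => hD (.inr (.inl 2)) k
  have p6 : ∀ k, _ := fun k => hD (.inr (.inr 0)) k
  have p7 : ∀ k, _ := fun k => hD (.inr (.inr 1)) k
  have p8 : ∀ k, _ := fun k => hD (.inr (.inr 2)) k
  simp [D_emb, emb_emb, pts4, Fin.sum_univ_succ, dd1, s1] at p0 p1 p2 p3 p4 p5 p6 p7 p8
  clear hD
  simp only [forall10, s1, s2, dd1, dd2, z1,z2,z3,z4,z5, Fin.reduceLT, Fin.reduceLE, Fin.isValue,
    add_zero, zero_add, neg_zero, true_and, and_true] at p0 p1 p2 p3 p4 p5 p6 p7 p8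
  refine sorted_zero_list hc
    (fun i j k => i == j || j == k || k ≤ 6 || 4 ≤ i || (i == 0 && 4 ≤ j) || (j ≤ 3 && 7 ≤ k) ||
      (i ≤ 3 && 7 ≤ j)) ?_
    [(1, 4, 7), (1, 4, 8), (1, 4, 9), (1, 5, 7), (1, 5, 8), (1, 5, 9), (1, 6, 7), (1, 6, 8),
      (1, 6, 9), (2, 4, 7), (2, 4, 8), (2, 4, 9), (2, 5, 7), (2, 5, 8), (2, 5, 9), (2, 6, 7),
      (2, 6, 8), (2, 6, 9), (3, 4, 7), (3, 4, 8), (3, 4, 9), (3, 5, 7), (3, 5, 8), (3, 5, 9),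
      (3, 6, 7), (3, 6, 8), (3, 6, 9)] ?_ (by decide)
  · intro i j k h1 h2 h3
    simp only [Bool.or_eq_true, Bool.and_eq_true, beq_iff_eq, decide_eq_true_eq] at h3
    rcases h3 with (((((rfl | rfl) | h) | h) | ⟨rfl, h⟩) | ⟨h, h'⟩) | ⟨h, h'⟩
    · exact dd1 _ _
    · exact dd2 _ _
    · exact z1 _ _ _ h h1 h2
    · exact z2 _ _ _ h h1 h2
    · exact z3 _ _ h h2
    · exact z4 _ _ _ h h' h1 h2
    · exact z5 _ _ _ h h' h1 h2
  simp only [List.Forall]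
  clear hc hz s1 s2 dd1 dd2 z1 z2 z3 z4 z5
  grind (splits := 37)

set_option maxHeartbeats 4000000 in
/-- Solution of `SD`; the unknowns left are the `36` coefficients with indices in `U`, `X i`,
  `X j`. -/
lemma exD : ∃ w p p', SD w p p' := by
  refine ⟨![emb ![3,4,5] ![2,1,-1], emb ![3,6] ![2,-1], emb ![1,2,6] ![-1,2,1]],
    ![emb ![3,4,6] ![2,1,1], emb ![1,2,6] ![-1,1,2], emb ![1,5] ![2,1], emb ![2,3,5] ![1,-1,2]],
    ![emb ![1,3,6] ![1,1,-1], emb ![4,6] ![2,2], emb ![1,4,5] ![-1,2,2], emb ![2,5] ![2,1]], ?_⟩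
  intro c hc hz hD
  have s1 : ∀ i j k, j < i → c i j k = c j i k := fun i j k _ => hc.1 i j k
  have s2 : ∀ i j k, k < j → c i j k = c i k j := fun i j k _ => hc.2 i j k
  have z1 : ∀ i j k, k ≤ 7 → i ≤ j → j ≤ k → c i j k = 0 := by
    intro i j k h0 h1 h2
    refine hz i j k (?_)
    revert i j k; unfold inR; decide
  have z2 : ∀ i j k, 5 ≤ i → i ≤ j → j ≤ k → c i j k = 0 := by
    intro i j k h0 h1 h2
    refine hz i j k (?_)
    revert i j k; unfold inR; decide
  have z3 : ∀ j k, 5 ≤ j → j ≤ k → c 0 j k = 0 := by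
    intro j k h0 h1
    refine hz 0 j k (?_)
    revert j k; unfold inR; decide
  have z4 : ∀ i j k, j ≤ 4 → i ≤ j → j ≤ k → c i j k = 0 := by
    intro i j k h0 h1 h2
    refine hz i j k (?_)
    revert i j k; unfold inR; decide
  have z5 : ∀ i j k, i ≤ 4 → 8 ≤ j → i ≤ j → j ≤ k → c i j k = 0 := by
    intro i j k h0 h1 h2 h3
    refine hz i j k (?_)
    revert i j k; unfold inR; decide
  have dd1 : ∀ i k, c i i k = 0 := fun i k => hz _ _ _ (by revert i k; unfold inR; decide)
  have dd2 : ∀ i k, c i k k = 0 := fun i k => by rw [hc.1, hc.2]; exact dd1 k i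
  have p0 : ∀ k, _ := fun k => hD (.inl 0) k
  have p1 : ∀ k, _ := fun k => hD (.inl 1) k
  have p2 : ∀ k, _ := fun k => hD (.inl 2) k
  have p3 : ∀ k, _ := fun k => hD (.inr (.inl 0)) k
  have p4 : ∀ k, _ := fun k => hD (.inr (.inl 1)) k
  have p5 : ∀ k, _ := fun k => hD (.inr (.inl 2)) k
  have p6 : ∀ k, _ := fun k => hD (.inr (.inl 3)) k
  have p7 : ∀ k, _ := fun k => hD (.inr (.inr 0)) k
  have p8 : ∀ k, _ := fun k => hD (.inr (.inr 1)) k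
  have p9 : ∀ k, _ := fun k => hD (.inr (.inr 2)) k
  have p10 : ∀ k, _ := fun k => hD (.inr (.inr 3)) k
  simp [D_emb, emb_emb, pts4, Fin.sum_univ_succ, dd1, s1] at p0 p1 p2 p3 p4 p5 p6 p7 p8 p9 p10
  clear hD
  simp only [forall11, s1, s2, dd1, dd2, z1,z2,z3,z4,z5, Fin.reduceLT, Fin.reduceLE, Fin.isValue,
    add_zero, zero_add, neg_zero, true_and, and_true] at p0 p1 p2 p3 p4 p5 p6 p7 p8 p9 p10
  refine sorted_zero_list hc
    (fun i j k => i == j || j == k || k ≤ 7 || 5 ≤ i || (i == 0 && 5 ≤ j) || j ≤ 4 ||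
      (i ≤ 4 && 8 ≤ j)) ?_
    [(1, 5, 8), (1, 5, 9), (1, 5, 10), (1, 6, 8), (1, 6, 9), (1, 6, 10), (1, 7, 8), (1, 7, 9),
      (1, 7, 10), (2, 5, 8), (2, 5, 9), (2, 5, 10), (2, 6, 8), (2, 6, 9), (2, 6, 10), (2, 7, 8),
      (2, 7, 9), (2, 7, 10), (3, 5, 8), (3, 5, 9), (3, 5, 10), (3, 6, 8), (3, 6, 9), (3, 6, 10),
      (3, 7, 8), (3, 7, 9), (3, 7, 10), (4, 5, 8), (4, 5, 9), (4, 5, 10), (4, 6, 8), (4, 6, 9),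
      (4, 6, 10), (4, 7, 8), (4, 7, 9), (4, 7, 10)] ?_ (by decide)
  · intro i j k h1 h2 h3
    simp only [Bool.or_eq_true, Bool.and_eq_true, beq_iff_eq, decide_eq_true_eq] at h3
    rcases h3 with (((((rfl | rfl) | h) | h) | ⟨rfl, h⟩) | h) | ⟨h, h'⟩
    · exact dd1 _ _
    · exact dd2 _ _
    · exact z1 _ _ _ h h1 h2
    · exact z2 _ _ _ h h1 h2
    · exact z3 _ _ h h2
    · exact z4 _ _ _ h h1 h2
    · exact z5 _ _ _ h h' h1 h2
  simp only [List.Forall]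
  clear hc hz s1 s2 dd1 dd2 z1 z2 z3 z4 z5
  grind (splits := 46)

set_option maxHeartbeats 4000000 in
/-- Solution of `SE`: the points `p` are the four coordinate points of `U`,
  so that all `cᵢᵢₖ` vanish,
and the six points `q` give a linear system in the remaining coefficients. -/
lemma exE : ∃ p q, SE p q := by
  refine ⟨![emb ![1] ![1], emb ![2] ![1], emb ![3] ![1], emb ![4] ![1]],
    ![emb ![3,4,5,7] ![-1,-1,-1,1], emb ![1,3,4,6] ![1,2,-1,1], emb ![0,2,3,4] ![-1,-1,1,1],
      emb ![2,3,6,7] ![1,-1,1,1], emb ![0,1,3,5] ![-1,-1,-1,2], emb ![1,2,4,7] ![1,-1,1,1]], ?_⟩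
  intro c hc hz hD
  have s1 : ∀ i j k, j < i → c i j k = c j i k := fun i j k _ => hc.1 i j k
  have s2 : ∀ i j k, k < j → c i j k = c i k j := fun i j k _ => hc.2 i j k
  have z1 : ∀ i j k, 5 ≤ i → i ≤ j → j ≤ k → c i j k = 0 := by
    intro i j k h0 h1 h2
    refine hz i j k (?_)
    revert i j k; unfold inR; decide
  have z2 : ∀ j k, 5 ≤ j → j ≤ k → c 0 j k = 0 := by
    intro j k h0 h1
    refine hz 0 j k (?_)
    revert j k; unfold inR; decide
  have d0 : ∀ k, c 0 0 k = 0 := fun k =>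
    by simpa [D_emb, emb_emb, Fin.sum_univ_succ, pts4] using hD (.inl ()) k
  have d1 : ∀ k, c 1 1 k = 0 := fun k =>
    by simpa [D_emb, emb_emb, Fin.sum_univ_succ, pts4] using hD (.inr (.inr (.inl 0))) k
  have d2 : ∀ k, c 2 2 k = 0 := fun k =>
    by simpa [D_emb, emb_emb, Fin.sum_univ_succ, pts4] using hD (.inr (.inr (.inl 1))) k
  have d3 : ∀ k, c 3 3 k = 0 := fun k =>
    by simpa [D_emb, emb_emb, Fin.sum_univ_succ, pts4] using hD (.inr (.inr (.inl 2))) k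
  have d4 : ∀ k, c 4 4 k = 0 := fun k =>
    by simpa [D_emb, emb_emb, Fin.sum_univ_succ, pts4] using hD (.inr (.inr (.inl 3))) k
  have d5 : ∀ k, c 5 5 k = 0 := fun k =>
    by simpa [D_emb, emb_emb, Fin.sum_univ_succ, pts4] using hD (.inr (.inl 0)) k
  have d6 : ∀ k, c 6 6 k = 0 := fun k =>
    by simpa [D_emb, emb_emb, Fin.sum_univ_succ, pts4] using hD (.inr (.inl 1)) k
  have d7 : ∀ k, c 7 7 k = 0 := fun k =>
    by simpa [D_emb, emb_emb, Fin.sum_univ_succ, pts4] using hD (.inr (.inl 2)) k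
  have dd1 : ∀ i k, c i i k = 0 := by
    intro i; fin_cases i <;> assumption
  have dd2 : ∀ i k, c i k k = 0 := fun i k => by rw [hc.1, hc.2]; exact dd1 k i
  have p0 : ∀ k, _ := fun k => hD (.inr (.inl 3)) k
  have p1 : ∀ k, _ := fun k => hD (.inr (.inr (.inr 0))) k
  have p2 : ∀ k, _ := fun k => hD (.inr (.inr (.inr 1))) k
  have p3 : ∀ k, _ := fun k => hD (.inr (.inr (.inr 2))) k
  have p4 : ∀ k, _ := fun k => hD (.inr (.inr (.inr 3))) k
  have p5 : ∀ k, _ := fun k => hD (.inr (.inr (.inr 4))) k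
  have p6 : ∀ k, _ := fun k => hD (.inr (.inr (.inr 5))) k
  simp [D_emb, emb_emb, pts4, Fin.sum_univ_succ, dd1, s1] at p0 p1 p2 p3 p4 p5 p6
  clear hD
  simp only [forall8, s1, s2, dd1, dd2, z1,z2, Fin.reduceLT, Fin.reduceLE, Fin.isValue,
    add_zero, zero_add, neg_zero, true_and, and_true] at p0 p1 p2 p3 p4 p5 p6
  refine sorted_zero_list hc
    (fun i j k => i == j || j == k || 5 ≤ i || (i == 0 && 5 ≤ j)) ?_
    [(0, 1, 2), (0, 1, 3), (0, 1, 4), (0, 1, 5), (0, 1, 6), (0, 1, 7), (0, 2, 3), (0, 2, 4),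
      (0, 2, 5), (0, 2, 6), (0, 2, 7), (0, 3, 4), (0, 3, 5), (0, 3, 6), (0, 3, 7), (0, 4, 5),
      (0, 4, 6), (0, 4, 7), (1, 2, 3), (1, 2, 4), (1, 2, 5), (1, 2, 6), (1, 2, 7), (1, 3, 4),
      (1, 3, 5), (1, 3, 6), (1, 3, 7), (1, 4, 5), (1, 4, 6), (1, 4, 7), (1, 5, 6), (1, 5, 7),
      (1, 6, 7), (2, 3, 4), (2, 3, 5), (2, 3, 6), (2, 3, 7), (2, 4, 5), (2, 4, 6), (2, 4, 7),
      (2, 5, 6), (2, 5, 7), (2, 6, 7), (3, 4, 5), (3, 4, 6), (3, 4, 7), (3, 5, 6), (3, 5, 7),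
      (3, 6, 7), (4, 5, 6), (4, 5, 7), (4, 6, 7)] ?_ (by decide)
  · intro i j k h1 h2 h3
    simp only [Bool.or_eq_true, Bool.and_eq_true, beq_iff_eq, decide_eq_true_eq] at h3
    rcases h3 with ((rfl | rfl) | h) | ⟨rfl, h⟩
    · exact dd1 _ _
    · exact dd2 _ _
    · exact z1 _ _ _ h h1 h2
    · exact z2 _ _ h h2
  simp only [List.Forall]
  clear hc hz s1 s2 dd1 dd2 z1 z2
  grind (splits := 62)

set_option maxHeartbeats 2000000 in
/-- Solution of `SF`: four of the points `q` are the coordinate points of `U`. -/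
lemma exF : ∃ p q, SF p q := by
  refine ⟨![emb ![1,3,5,7] ![1,1,-1,2],emb ![2,3,6,7] ![1,1,1,2],
    emb ![0,2,4,6,7] ![2,2,1,-1,1],emb ![2,4,5,7] ![1,-1,2,2]],
    ![emb ![1] ![1],emb ![2] ![1],emb ![3] ![1],emb ![4] ![1],emb ![1,2] ![1,1],
      emb ![0,1,3] ![-1,1,-1]], ?_⟩
  intro c hc hz hD
  have s1 : ∀ i j k, j < i → c i j k = c j i k := fun i j k _ => hc.1 i j k
  have s2 : ∀ i j k, k < j → c i j k = c i k j := fun i j k _ => hc.2 i j k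
  have zL : ∀ i j k, i ∈ ({0,5,6,7} : Finset (Fin 8)) ∧ j ∈ ({0,5,6,7} : Finset (Fin 8)) ∧
    k ∈ ({0,5,6,7} : Finset (Fin 8)) → c i j k = 0 := by
    intro i j k h
    refine hz i j k (Or.inl ?_)
    revert i j k; unfold inR; decide
  have zM : ∀ i j k, k ≤ 4 → i ≤ j → j ≤ k → c i j k = 0 := by
    intro i j k h h' h''
    refine hz i j k (Or.inr ?_)
    revert i j k; unfold inR; decide
  have zL1 : ∀ i j k, 5 ≤ i → i ≤ j → j ≤ k → c i j k = 0 := by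
    intro i j k h h' h''
    refine hz i j k (Or.inl ?_)
    revert i j k; unfold inR; decide
  have zL2 : ∀ j k, 5 ≤ j → j ≤ k → c 0 j k = 0 := by
    intro j k h h'
    refine hz 0 j k (Or.inl ?_)
    revert j k; unfold inR; decide
  have d0 : ∀ k, c 0 0 k = 0 := by
    intro k; fin_cases k <;>
      first
      | exact zL _ _ _ (by decide)
      | exact zM _ _ _ (by decide) (by decide) (by decide)
  have d5 : ∀ k, c 5 5 k = 0 := fun k =>
    by simpa [D_emb, Fin.sum_univ_succ, pts4] using hD (.inl 0) k
  have d6 : ∀ k, c 6 6 k = 0 := fun k =>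
    by simpa [D_emb, Fin.sum_univ_succ, pts4] using hD (.inl 1) k
  have d7 : ∀ k, c 7 7 k = 0 := fun k =>
    by simpa [D_emb, Fin.sum_univ_succ, pts4] using hD (.inl 2) k
  have d1 : ∀ k, c 1 1 k = 0 := fun k =>
    by simpa [D_emb, emb_emb,Fin.sum_univ_succ, pts4] using hD (.inr (.inr 0)) k
  have d2 : ∀ k, c 2 2 k = 0 := fun k =>
    by simpa [D_emb, emb_emb,Fin.sum_univ_succ, pts4] using hD (.inr (.inr 1)) k
  have d3 : ∀ k, c 3 3 k = 0 := fun k =>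
    by simpa [D_emb, emb_emb,Fin.sum_univ_succ, pts4] using hD (.inr (.inr 2)) k
  have d4 : ∀ k, c 4 4 k = 0 := fun k =>
    by simpa [D_emb, emb_emb,Fin.sum_univ_succ, pts4] using hD (.inr (.inr 3)) k
  have dd1 : ∀ i k, c i i k = 0 := by
    intro i; fin_cases i <;> assumption
  have dd2 : ∀ i k, c i k k = 0 := fun i k => by rw [hc.1, hc.2]; exact dd1 k i
  have p0 : ∀ k, _ := fun k => hD (.inl 3) k
  have p1 : ∀ k, _ := fun k => hD (.inr (.inl 0)) k
  have p2 : ∀ k, _ := fun k => hD (.inr (.inl 1)) k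
  have p3 : ∀ k, _ := fun k => hD (.inr (.inl 2)) k
  have p4 : ∀ k, _ := fun k => hD (.inr (.inl 3)) k
  have p5 : ∀ k, _ := fun k => hD (.inr (.inr 4)) k
  have p6 : ∀ k, _ := fun k => hD (.inr (.inr 5)) k
  simp [D_emb, emb_emb, pts4, Fin.sum_univ_succ,dd1,s1] at p0 p1 p2 p3 p4 p5 p6
  clear hD
  simp only [forall8,s1,s2,dd1,dd2,zL1,zL2,zM, Fin.reduceLT,Fin.reduceLE,Fin.isValue,add_zero,
    zero_add,neg_zero,true_and,and_true] at p0 p1 p2 p3 p4 p5 p6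
  refine sorted_zero_list hc
    (fun i j k => i == j || j == k || 5 ≤ i || (i == 0 && 5 ≤ j) || k ≤ 4) ?_
    [(0, 1, 5), (0, 1, 6), (0, 1, 7), (0, 2, 5), (0, 2, 6), (0, 2, 7), (0, 3, 5), (0, 3, 6), (0,
      3, 7), (0, 4, 5), (0, 4, 6), (0, 4, 7), (1, 2, 5), (1, 2, 6), (1, 2, 7), (1, 3, 5), (1, 3,
      6), (1, 3, 7), (1, 4, 5), (1, 4, 6), (1, 4, 7), (1, 5, 6), (1, 5, 7), (1, 6, 7), (2, 3,
      5), (2, 3, 6), (2, 3, 7), (2, 4, 5), (2, 4, 6), (2, 4, 7), (2, 5, 6), (2, 5, 7), (2, 6,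
      7), (3, 4, 5), (3, 4, 6), (3, 4, 7), (3, 5, 6), (3, 5, 7), (3, 6, 7), (4, 5, 6), (4, 5,
      7), (4, 6, 7)] ?_ (by decide)
  · intro i j k h1 h2 h3
    simp only [Bool.or_eq_true, Bool.and_eq_true, beq_iff_eq, decide_eq_true_eq] at h3
    rcases h3 with (((rfl | rfl) | h) | ⟨rfl, h⟩) | h
    · exact dd1 _ _
    · exact dd2 _ _
    · exact zL1 _ _ _ h h1 h2
    · exact zL2 _ _ h h2
    · exact zM _ _ _ h h1 h2
  simp only [List.Forall]
  clear hc hz s1 s2 zL zL1 zL2 zM dd1 dd2 d0 d1 d2 d3 d4 d5 d6 d7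
  grind (splits := 60)

/-! ### The special configuration -/

/-- The indices of the coordinates: `O`, `U b` and `X i a`. -/
abbrev Idx (r : ℕ) := Unit ⊕ Fin 4 ⊕ (Fin r × Fin 3)

abbrev ixO {r : ℕ} : Idx r := .inl ()

abbrev ixU {r : ℕ} (b : Fin 4) : Idx r := .inr (.inl b)

abbrev ixX {r : ℕ} (i : Fin r) (a : Fin 3) : Idx r := .inr (.inr (i, a))

/-- The parameters of the special configuration: the coordinates of the points on `Λᵢ + Λⱼ`, of the
four points on `Mᵢ`, and of the six additional points on `M_{i₀}`. -/
abbrev Par (r : ℕ) := (Fin r × Fin r × Fin 3 × Fin 7) ⊕ (Fin r × Fin 4 × Fin 8) ⊕ (Fin 6 × Fin 8)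

/-- The three points on `Λᵢ + Λⱼ`, in the coordinates of `e7 i j`. -/
def parW {r : ℕ} (t : Par r → ℂ) (i j : Fin r) : Fin 3 → Fin 7 → ℂ :=
  fun a l => t (.inl (i, j, a, l))

/-- The four points on `Mᵢ`, in the coordinates of `e8 i`. -/
def parP {r : ℕ} (t : Par r → ℂ) (i : Fin r) : Fin 4 → Fin 8 → ℂ :=
  fun b l => t (.inr (.inl (i, b, l)))

/-- The six additional points on `M_{i₀}`, in the coordinates of `e8 i₀`. -/
def parQ {r : ℕ} (t : Par r → ℂ) : Fin 6 → Fin 8 → ℂ := fun a l => t (.inr (.inr (a, l)))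

/-- The first five coordinates of the six additional points: their components on `⟨O, U⟩`. -/
def parQ5 {r : ℕ} (t : Par r → ℂ) : Fin 6 → Fin 5 → ℂ :=
  fun a l => parQ t a ((![0,1,2,3,4] : Fin 5 → Fin 8) l)

/-- The parameter value with the given points. -/
def mkPar {r : ℕ} (w : Fin r → Fin r → Fin 3 → Fin 7 → ℂ) (p : Fin r → Fin 4 → Fin 8 → ℂ)
    (q : Fin 6 → Fin 8 → ℂ) : Par r → ℂ :=
  Sum.elim (fun m => w m.1 m.2.1 m.2.2.1 m.2.2.2)
    (Sum.elim (fun m => p m.1 m.2.1 m.2.2) fun m => q m.1 m.2)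

/-- The coordinate vectors spanning `Λᵢ`. -/
def e4 {r : ℕ} (i : Fin r) : Fin 4 → Idx r := ![ixO, ixX i 0, ixX i 1, ixX i 2]

/-- The coordinate vectors spanning `Λᵢ + Λⱼ`. -/
def e7 {r : ℕ} (i j : Fin r) : Fin 7 → Idx r :=
  ![ixO, ixX i 0, ixX i 1, ixX i 2, ixX j 0, ixX j 1, ixX j 2]

/-- The coordinate vectors spanning `Mᵢ`. -/
def e8 {r : ℕ} (i : Fin r) : Fin 8 → Idx r :=
  ![ixO, ixU 0, ixU 1, ixU 2, ixU 3, ixX i 0, ixX i 1, ixX i 2]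

/-- The coordinate vectors spanning `Λᵢ + Λⱼ + Λₖ`. -/
def e10 {r : ℕ} (i j k : Fin r) : Fin 10 → Idx r :=
  ![ixO, ixX i 0, ixX i 1, ixX i 2, ixX j 0, ixX j 1, ixX j 2, ixX k 0, ixX k 1, ixX k 2]

/-- The coordinate vectors spanning `Mᵢ + Mⱼ`. -/
def e11 {r : ℕ} (i j : Fin r) : Fin 11 → Idx r :=
  ![ixO, ixU 0, ixU 1, ixU 2, ixU 3, ixX i 0, ixX i 1, ixX i 2, ixX j 0, ixX j 1, ixX j 2]

/-- Labels of the special points on `L`. -/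
abbrev PL (r : ℕ) := Unit ⊕ (Fin r × Fin 4) ⊕ ({m : Fin r × Fin r // m.1 < m.2} × Fin 3)

/-- Labels of the special points off `L`. -/
abbrev PO (r : ℕ) := (Fin r × Fin 4) ⊕ Fin 6

/-- The special points on `L`. -/
def ptsL {r : ℕ} (t : Par r → ℂ) : PL r → Idx r → ℂ :=
  Sum.elim (fun _ => emb (![ixO] : Fin 1 → Idx r) ![1])
    (Sum.elim (fun m => emb (e4 m.1) (pts4 m.2)) fun m =>
      emb (e7 m.1.1.1 m.1.1.2) (parW t m.1.1.1 m.1.1.2 m.2))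

/-- The special points off `L`. -/
def ptsO {r : ℕ} (i₀ : Fin r) (t : Par r → ℂ) : PO r → Idx r → ℂ :=
  Sum.elim (fun m => emb (e8 m.1) (parP t m.1 m.2)) fun a => emb (e8 i₀) (parQ t a)

/-- All the special points. -/
def ptsA {r : ℕ} (i₀ : Fin r) (t : Par r → ℂ) : PL r ⊕ PO r → Idx r → ℂ :=
  Sum.elim (ptsL t) (ptsO i₀ t)

/-! ### Genericity of the local systems -/

lemma gen_SB {r : ℕ} {i j : Fin r} : Generic fun t : Par r → ℂ => SB (parW t i j) := by
  obtain ⟨w, hw⟩ := exB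
  refine generic_sys ?_ (mkPar (fun _ _ => w) 0 0) hw
  rintro (b | b | a) l
  · exact PolyFn.const _
  · exact PolyFn.const _
  · exact PolyFn.var _

lemma gen_SC {r : ℕ} {i j k : Fin r} (hij : i < j) (hjk : j < k) :
    Generic fun t : Par r → ℂ => SC (parW t i j) (parW t i k) (parW t j k) := by
  obtain ⟨w12, w13, w23, hw⟩ := exC
  have h1 : k ≠ j := hjk.ne'
  have h2 : j ≠ i := hij.ne'
  let w : Fin r → Fin r → Fin 3 → Fin 7 → ℂ := fun a b =>
    if a = j then w23 else if b = j then w12 else w13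
  refine generic_sys ?_ (mkPar w 0 0) ?_
  · rintro (a | a | a) l
    · exact PolyFn.emb _ (w := fun t => parW t i j a) (fun m => PolyFn.var _) l
    · exact PolyFn.emb _ (w := fun t => parW t i k a) (fun m => PolyFn.var _) l
    · exact PolyFn.emb _ (w := fun t => parW t j k a) (fun m => PolyFn.var _) l
  · have e1 : parW (mkPar w 0 0) i j = w12 := by
      funext a l; simp [parW, mkPar, w, h2.symm]
    have e2 : parW (mkPar w 0 0) i k = w13 := by
      funext a l; simp [parW, mkPar, w, h2.symm, h1]
    have e3 : parW (mkPar w 0 0) j k = w23 := by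
      funext a l; simp [parW, mkPar, w]
    rw [e1, e2, e3]
    exact hw

lemma gen_SD {r : ℕ} {i j : Fin r} (hij : i < j) :
    Generic fun t : Par r → ℂ => SD (parW t i j) (parP t i) (parP t j) := by
  obtain ⟨w, p, p', hw⟩ := exD
  have h : j ≠ i := hij.ne'
  let f : Fin r → Fin 4 → Fin 8 → ℂ := fun a => if a = i then p else p'
  refine generic_sys ?_ (mkPar (fun _ _ => w) f 0) ?_
  · rintro (a | a | a) l
    · exact PolyFn.emb _ (w := fun t => parW t i j a) (fun m => PolyFn.var _) l
    · exact PolyFn.emb _ (w := fun t => parP t i a) (fun m => PolyFn.var _) l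
    · exact PolyFn.emb _ (w := fun t => parP t j a) (fun m => PolyFn.var _) l
  · have e1 : parP (mkPar (fun _ _ => w) f 0) i = p := by
      funext a l; simp [parP, mkPar, f]
    have e2 : parP (mkPar (fun _ _ => w) f 0) j = p' := by
      funext a l; simp [parP, mkPar, f, h]
    rw [e1, e2]
    exact hw

lemma gen_SE {r : ℕ} {i : Fin r} : Generic fun t : Par r → ℂ => SE (parP t i) (parQ t) := by
  obtain ⟨p, q, hw⟩ := exE
  refine generic_sys ?_ (mkPar 0 (fun _ => p) q) hw
  rintro (b | b | a | a) l
  · exact PolyFn.const _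
  · exact PolyFn.const _
  · exact PolyFn.var _
  · exact PolyFn.var _

lemma gen_SF {r : ℕ} {i : Fin r} : Generic fun t : Par r → ℂ => SF (parP t i) (parQ5 t) := by
  obtain ⟨p, q, hw⟩ := exF
  let q' : Fin 6 → Fin 8 → ℂ := fun a => emb (![0,1,2,3,4] : Fin 5 → Fin 8) (q a)
  refine generic_sys ?_ (mkPar 0 (fun _ => p) q') ?_
  · rintro (b | a | a) l
    · exact PolyFn.const _
    · exact PolyFn.var _
    · exact PolyFn.emb _ (w := fun t => parQ5 t a) (fun m => PolyFn.var _) l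
  · have e1 : parQ5 (mkPar 0 (fun _ : Fin r => p) q') = q := by
      funext a l
      simp only [parQ5, parQ, mkPar, Sum.elim_inr, q', emb]
      fin_cases l <;> simp [Fin.sum_univ_succ]
    rw [e1]
    exact hw

/-! ### Solving the special configuration -/

lemma inR.map {κ' κ ι : Type} {g : κ' → κ} {e : κ → ι} {i j k : κ} (h : inR g i j k) :
    inR (e ∘ g) (e i) (e j) (e k) := by
  obtain ⟨⟨a, rfl⟩, ⟨b, rfl⟩, ⟨d, rfl⟩⟩ := h
  exact ⟨⟨a, rfl⟩, ⟨b, rfl⟩, ⟨d, rfl⟩⟩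

lemma Sys.pull' {κ ι α : Type} [Fintype κ] [Fintype ι] [DecidableEq ι] [DecidableEq κ]
    {pts : α → κ → ℂ} {zero : κ → κ → κ → Prop} (h : Sys pts zero) (e : κ → ι)
    {c : ι → ι → ι → ℂ} (hc : Symm3 c)
    (hz : ∀ i j k, zero i j k → c (e i) (e j) (e k) = 0)
    (hD : ∀ s k, D c (emb e (pts s)) k = 0) (i j k : ι) (hi : inR e i j k) : c i j k = 0 := by
  obtain ⟨⟨a, rfl⟩, ⟨b, rfl⟩, ⟨d, rfl⟩⟩ := hi
  exact h.pull e hc hz hD a b d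

section comps
variable {r : ℕ} (i j k : Fin r)

lemma e4_o : e4 i ∘ (![0] : Fin 1 → Fin 4) = ![ixO] := by funext m; fin_cases m; rfl
lemma e7_l : e7 i j ∘ (![0,1,2,3] : Fin 4 → Fin 7) = e4 i := by funext m; fin_cases m <;> rfl
lemma e7_r : e7 i j ∘ (![0,4,5,6] : Fin 4 → Fin 7) = e4 j := by funext m; fin_cases m <;> rfl
lemma e8_o : e8 i ∘ (![0] : Fin 1 → Fin 8) = ![ixO] := by funext m; fin_cases m; rfl
lemma e8_x : e8 i ∘ (![0,5,6,7] : Fin 4 → Fin 8) = e4 i := by funext m; fin_cases m <;> rfl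
lemma e8_u : e8 i ∘ (![0,1,2,3,4] : Fin 5 → Fin 8) = ![ixO, ixU 0, ixU 1, ixU 2, ixU 3] := by
  funext m; fin_cases m <;> rfl
lemma e10_1 : e10 i j k ∘ (![0,1,2,3,4,5,6] : Fin 7 → Fin 10) = e7 i j := by
  funext m; fin_cases m <;> rfl
lemma e10_2 : e10 i j k ∘ (![0,1,2,3,7,8,9] : Fin 7 → Fin 10) = e7 i k := by
  funext m; fin_cases m <;> rfl
lemma e10_3 : e10 i j k ∘ (![0,4,5,6,7,8,9] : Fin 7 → Fin 10) = e7 j k := by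
  funext m; fin_cases m <;> rfl
lemma e11_1 : e11 i j ∘ (![0,5,6,7,8,9,10] : Fin 7 → Fin 11) = e7 i j := by
  funext m; fin_cases m <;> rfl
lemma e11_2 : e11 i j ∘ (![0,1,2,3,4,5,6,7] : Fin 8 → Fin 11) = e8 i := by
  funext m; fin_cases m <;> rfl
lemma e11_3 : e11 i j ∘ (![0,1,2,3,4,8,9,10] : Fin 8 → Fin 11) = e8 j := by
  funext m; fin_cases m <;> rfl

end comps

/-- All three indices lie in `⟨O, U⟩`. -/
def zOU {r : ℕ} : Idx r → Idx r → Idx r → Prop :=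
  inR (![ixO, ixU 0, ixU 1, ixU 2, ixU 3] : Fin 5 → Idx r)

section mem
variable {r : ℕ} (i j k : Fin r) (a : Fin 3) (b : Fin 4)
lemma m4x : ixX i a ∈ Set.range (e4 i) := ⟨![1,2,3] a, by fin_cases a <;> rfl⟩
lemma m7o : ixO ∈ Set.range (e7 i j) := ⟨0, rfl⟩
lemma m7i : ixX i a ∈ Set.range (e7 i j) := ⟨![1,2,3] a, by fin_cases a <;> rfl⟩
lemma m7j : ixX j a ∈ Set.range (e7 i j) := ⟨![4,5,6] a, by fin_cases a <;> rfl⟩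
lemma m8o : ixO ∈ Set.range (e8 i) := ⟨0, rfl⟩
lemma m8u : ixU b ∈ Set.range (e8 i) := ⟨![1,2,3,4] b, by fin_cases b <;> rfl⟩
lemma m8x : ixX i a ∈ Set.range (e8 i) := ⟨![5,6,7] a, by fin_cases a <;> rfl⟩
lemma m10i : ixX i a ∈ Set.range (e10 i j k) := ⟨![1,2,3] a, by fin_cases a <;> rfl⟩
lemma m10j : ixX j a ∈ Set.range (e10 i j k) := ⟨![4,5,6] a, by fin_cases a <;> rfl⟩
lemma m10k : ixX k a ∈ Set.range (e10 i j k) := ⟨![7,8,9] a, by fin_cases a <;> rfl⟩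
lemma m11o : ixO ∈ Set.range (e11 i j) := ⟨0, rfl⟩
lemma m11u : ixU b ∈ Set.range (e11 i j) := ⟨![1,2,3,4] b, by fin_cases b <;> rfl⟩
lemma m11i : ixX i a ∈ Set.range (e11 i j) := ⟨![5,6,7] a, by fin_cases a <;> rfl⟩
lemma m11j : ixX j a ∈ Set.range (e11 i j) := ⟨![8,9,10] a, by fin_cases a <;> rfl⟩
lemma mo : (ixO : Idx r) ∈ Set.range (![ixO, ixU 0, ixU 1, ixU 2, ixU 3] : Fin 5 → Idx r) :=
  ⟨0, rfl⟩
lemma mu : (ixU b : Idx r) ∈ Set.range (![ixO, ixU 0, ixU 1, ixU 2, ixU 3] : Fin 5 → Idx r) :=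
  ⟨![1,2,3,4] b, by fin_cases b <;> rfl⟩
end mem

/-- Vanishing of a symmetric tensor may be checked on triples sorted by a weight. -/
lemma weight_sorted {ι : Type} {c : ι → ι → ι → ℂ} (hc : Symm3 c) (ω : ι → ℕ)
    (h : ∀ i j k, ω i ≤ ω j → ω j ≤ ω k → c i j k = 0) : ∀ i j k, c i j k = 0 := by
  intro i j k
  obtain ⟨h1, h2⟩ := hc
  rcases le_total (ω i) (ω j) with a | a <;> rcases le_total (ω j) (ω k) with b | b <;>
    rcases le_total (ω i) (ω k) with d | d <;> grind

/-- The tensor vanishes on every `Λᵢ`. -/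
lemma A_zero {r : ℕ} (i₀ : Fin r) {t : Par r → ℂ} {c : Idx r → Idx r → Idx r → ℂ} (hc : Symm3 c)
    (hD : ∀ s k, D c (ptsA i₀ t s) k = 0) (i : Fin r) :
    ∀ a b d, inR (e4 i) a b d → c a b d = 0 := by
  refine Sys.pull' sysA (e4 i) hc (fun _ _ _ h => h.elim) ?_
  rintro (_ | b) k
  · rw [Sum.elim_inl, emb_emb, e4_o]
    exact hD (.inl (.inl ())) k
  · exact hD (.inl (.inr (.inl (i, b)))) k

lemma polyFn_ptsA {r : ℕ} (i₀ : Fin r) (s : PL r ⊕ PO r) (l : Idx r) :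
    PolyFn fun t : Par r → ℂ => ptsA i₀ t s l := by
  rcases s with (_ | m | m) | m | a
  · exact PolyFn.const _
  · exact PolyFn.const _
  · exact PolyFn.emb _ (w := fun t => parW t m.1.1.1 m.1.1.2 m.2) (fun m => PolyFn.var _) l
  · exact PolyFn.emb _ (w := fun t => parP t m.1 m.2) (fun m => PolyFn.var _) l
  · exact PolyFn.emb _ (w := fun t => parQ t a) (fun m => PolyFn.var _) l

/-- For generic points of the special shape, a symmetric tensor that satisfies all the conditions
and vanishes on `⟨O, U⟩` is zero. The parameter value used has the six
additional points on `⟨O, U⟩`. -/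
lemma gen_rel {r : ℕ} (i₀ : Fin r) : Generic fun t : Par r → ℂ => Sys (ptsA i₀ t) zOU := by
  have hgen : Generic fun t : Par r → ℂ => (∀ m : {m : Fin r × Fin r // m.1 < m.2},
      SB (parW t m.1.1 m.1.2) ∧ SD (parW t m.1.1 m.1.2) (parP t m.1.1) (parP t m.1.2)) ∧
      (∀ m : {m : Fin r × Fin r × Fin r // m.1 < m.2.1 ∧ m.2.1 < m.2.2},
        SC (parW t m.1.1 m.1.2.1) (parW t m.1.1 m.1.2.2) (parW t m.1.2.1 m.1.2.2)) ∧
      ∀ i, SF (parP t i) (parQ5 t) :=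
    (Generic.forall fun m => gen_SB.and (gen_SD m.2)).and
      ((Generic.forall fun m => gen_SC m.2.1 m.2.2).and (Generic.forall fun i => gen_SF))
  obtain ⟨t, hBD, hC, hF⟩ := hgen.exists
  -- The six additional points are projected to the common part of all the `Mᵢ`.
  let t₀ : Par r → ℂ :=
    mkPar (parW t) (parP t) fun a => emb (![0,1,2,3,4] : Fin 5 → Fin 8) (parQ5 t a)
  refine generic_sys (polyFn_ptsA i₀) t₀ ?_
  intro c hc hz hD
  have hw : ∀ {i j : Fin r}, i < j → ∀ a k, D c (emb (e7 i j) (parW t i j a)) k = 0 :=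
    fun {i j} h a k => hD (.inl (.inr (.inr (⟨(i, j), h⟩, a)))) k
  have hp : ∀ i b k, D c (emb (e8 i) (parP t i b)) k = 0 := fun i b k => hD (.inr (.inl (i, b))) k
  have zA := A_zero i₀ hc hD
  have zB : ∀ {i j : Fin r}, i < j → ∀ a b d, inR (e7 i j) a b d → c a b d = 0 := by
    intro i j hij
    refine Sys.pull' (hBD ⟨(i, j), hij⟩).1 (e7 i j) hc ?_ ?_
    · rintro a b d (h | h)
      · exact zA i _ _ _ (e7_l i j ▸ h.map)
      · exact zA j _ _ _ (e7_r i j ▸ h.map)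
    · rintro (b | b | a) k
      · rw [Sum.elim_inl, emb_emb, e7_l]
        exact hD (.inl (.inr (.inl (i, b)))) k
      · rw [Sum.elim_inr, Sum.elim_inl, emb_emb, e7_r]
        exact hD (.inl (.inr (.inl (j, b)))) k
      · exact hw hij a k
  have zC : ∀ {i j k : Fin r}, i < j → j < k → ∀ a b d, inR (e10 i j k) a b d → c a b d = 0 := by
    intro i j k hij hjk
    refine Sys.pull' (hC ⟨(i, j, k), hij, hjk⟩) (e10 i j k) hc ?_ ?_
    · rintro a b d (h | h | h)
      · exact zB hij _ _ _ (e10_1 i j k ▸ h.map)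
      · exact zB (hij.trans hjk) _ _ _ (e10_2 i j k ▸ h.map)
      · exact zB hjk _ _ _ (e10_3 i j k ▸ h.map)
    · rintro (a | a | a) l
      · rw [Sum.elim_inl, emb_emb, e10_1]
        exact hw hij a l
      · rw [Sum.elim_inr, Sum.elim_inl, emb_emb, e10_2]
        exact hw (hij.trans hjk) a l
      · rw [Sum.elim_inr, Sum.elim_inr, emb_emb, e10_3]
        exact hw hjk a l
  have zF : ∀ i a b d, inR (e8 i) a b d → c a b d = 0 := by
    intro i
    refine Sys.pull' (hF i) (e8 i) hc ?_ ?_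
    · rintro a b d (h | h)
      · exact zA i _ _ _ (e8_x i ▸ h.map)
      · have := h.map (e := e8 i)
        rw [e8_u] at this
        exact hz _ _ _ this
    · rintro (b | b | a) k
      · rw [Sum.elim_inl, emb_emb, e8_x]
        exact hD (.inl (.inr (.inl (i, b)))) k
      · exact hp i b k
      · rw [Sum.elim_inr, Sum.elim_inr, emb_emb, e8_u, ← e8_u i₀, ← emb_emb]
        exact hD (.inr (.inr a)) k
  have zD : ∀ {i j : Fin r}, i < j → ∀ a b d, inR (e11 i j) a b d → c a b d = 0 := by
    intro i j hij
    refine Sys.pull' (hBD ⟨(i, j), hij⟩).2 (e11 i j) hc ?_ ?_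
    · rintro a b d (h | h | h)
      · exact zB hij _ _ _ (e11_1 i j ▸ h.map)
      · exact zF i _ _ _ (e11_2 i j ▸ h.map)
      · exact zF j _ _ _ (e11_3 i j ▸ h.map)
    · rintro (a | a | a) l
      · rw [Sum.elim_inl, emb_emb, e11_1]
        exact hw hij a l
      · rw [Sum.elim_inr, Sum.elim_inl, emb_emb, e11_2]
        exact hp i a l
      · rw [Sum.elim_inr, Sum.elim_inr, emb_emb, e11_3]
        exact hp j a l
  -- The weight sorts the indices by block, with `O` and `U` first.
  refine weight_sorted hc (Sum.elim (fun _ => 0) (Sum.elim (fun _ => 0) fun m => m.1.val + 1)) ?_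
  have nO : ∀ n : Idx r, (∃ i a, n = ixX i a) ∨ ((∀ i, n ∈ Set.range (e8 i)) ∧
      (∀ i j, n ∈ Set.range (e11 i j)) ∧
      n ∈ Set.range (![ixO, ixU 0, ixU 1, ixU 2, ixU 3] : Fin 5 → Idx r)) := by
    rintro (_ | b | ⟨i, a⟩)
    · exact .inr ⟨fun _ => m8o _, fun _ _ => m11o _ _, mo⟩
    · exact .inr ⟨fun _ => m8u _ _, fun _ _ => m11u _ _ _, mu _⟩
    · exact .inl ⟨i, a, rfl⟩
  have hx : ∀ (n : Idx r) i a, n = ixX i a →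
      Sum.elim (fun _ => 0) (Sum.elim (fun _ => 0) fun m : Fin r × Fin 3 => m.1.val + 1) n
        = i.val + 1 := by
    rintro _ i a rfl; rfl
  have hu : ∀ n : Idx r, n ∈ Set.range (![ixO, ixU 0, ixU 1, ixU 2, ixU 3] : Fin 5 → Idx r) →
      Sum.elim (fun _ => 0) (Sum.elim (fun _ => 0) fun m : Fin r × Fin 3 => m.1.val + 1) n
        = 0 := by
    rintro _ ⟨m, rfl⟩; fin_cases m <;> rfl
  intro a b d h1 h2
  rcases nO d with ⟨k, δ, hd⟩ | ⟨-, -, d5⟩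
  swap
  · have hb5 : b ∈ Set.range (![ixO, ixU 0, ixU 1, ixU 2, ixU 3] : Fin 5 → Idx r) := by
      rcases nO b with ⟨j, β, hb⟩ | ⟨-, -, b5⟩
      · rw [hx b j β hb, hu d d5] at h2
        omega
      · exact b5
    have ha5 : a ∈ Set.range (![ixO, ixU 0, ixU 1, ixU 2, ixU 3] : Fin 5 → Idx r) := by
      rcases nO a with ⟨j, β, ha⟩ | ⟨-, -, a5⟩
      · rw [hx a j β ha, hu b hb5] at h1
        omega
      · exact a5
    exact hz _ _ _ ⟨ha5, hb5, d5⟩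
  rcases nO b with ⟨j, β, hb⟩ | ⟨b8, -, b5⟩
  swap
  · rcases nO a with ⟨i, α, ha⟩ | ⟨a8, -, -⟩
    · rw [hx a i α ha, hu b b5] at h1
      omega
    · exact zF k _ _ _ ⟨a8 k, b8 k, hd ▸ m8x k δ⟩
  rw [hx b j β hb, hx d k δ hd] at h2
  have hjk : j ≤ k := Fin.le_def.2 (by omega)
  rcases nO a with ⟨i, α, ha⟩ | ⟨a8, a11, -⟩
  swap
  · rcases hjk.eq_or_lt with rfl | hlt
    · exact zF j _ _ _ ⟨a8 j, hb ▸ m8x j β, hd ▸ m8x j δ⟩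
    · exact zD hlt _ _ _ ⟨a11 j k, hb ▸ m11i j k β, hd ▸ m11j j k δ⟩
  rw [hx a i α ha, hx b j β hb] at h1
  have hij : i ≤ j := Fin.le_def.2 (by omega)
  subst ha hb hd
  rcases hij.eq_or_lt with rfl | hij <;> rcases hjk.eq_or_lt with rfl | hjk
  · exact zA i _ _ _ ⟨m4x i α, m4x i β, m4x i δ⟩
  · exact zB hjk _ _ _ ⟨m7i i k α, m7i i k β, m7j i k δ⟩
  · exact zB hij _ _ _ ⟨m7i i j α, m7j i j β, m7j i j δ⟩
  · exact zC hij hjk _ _ _ ⟨m10i i j k α, m10j i j k β, m10k i j k δ⟩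

/-- Some special configuration admits no nonzero solution: vanishing on `⟨O, U⟩`, which `gen_rel`
assumes, is provided by the system on `M_{i₀}`. -/
lemma exists_sys {r : ℕ} (i₀ : Fin r) : ∃ t : Par r → ℂ, Sys (ptsA i₀ t) fun _ _ _ => False := by
  obtain ⟨t, hE, hR⟩ := ((gen_SE (i := i₀)).and (gen_rel i₀)).exists
  refine ⟨t, fun c hc _ hD => hR c hc ?_ hD⟩
  have zE : ∀ a b d, inR (e8 i₀) a b d → c a b d = 0 := by
    refine Sys.pull' hE (e8 i₀) hc (fun a b d h => A_zero i₀ hc hD i₀ _ _ _ (e8_x i₀ ▸ h.map)) ?_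
    rintro (b | b | b | a) k
    · rw [Sum.elim_inl, emb_emb, e8_o]
      exact hD (.inl (.inl ())) k
    · rw [Sum.elim_inr, Sum.elim_inl, emb_emb, e8_x]
      exact hD (.inl (.inr (.inl (i₀, b)))) k
    · exact hD (.inr (.inl (i₀, b))) k
    · exact hD (.inr (.inr a)) k
  intro a b d h
  rw [zOU, ← e8_u i₀] at h
  obtain ⟨⟨x, rfl⟩, ⟨y, rfl⟩, ⟨z, rfl⟩⟩ := h
  exact zE _ _ _ ⟨⟨_, rfl⟩, ⟨_, rfl⟩, ⟨_, rfl⟩⟩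

/-! ### Cardinalities and the transport to `Fin (n + 1)` -/

lemma sum_fin_val (r : ℕ) : 2 * ∑ j : Fin r, (j : ℕ) + r = r * r := by
  induction r with
  | zero => rfl
  | succ k ih =>
    rw [Fin.sum_univ_castSucc]
    simp only [Fin.val_castSucc, Fin.val_last]
    linarith

/-- There are at most `r(r-1)/2` pairs `i < j`, since `(i, j)` is determined by `j` and `i < j`. -/
lemma card_pairs (r : ℕ) : 2 * Fintype.card {m : Fin r × Fin r // m.1 < m.2} + r ≤ r * r := by
  have h := Fintype.card_le_of_injective
    (fun m : {m : Fin r × Fin r // m.1 < m.2} =>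
      (⟨m.1.2, ⟨m.1.1.val, m.2⟩⟩ : (j : Fin r) × Fin j)) (by
    rintro ⟨⟨a, b⟩, h⟩ ⟨⟨a', b'⟩, h'⟩ e
    obtain ⟨rfl, e2⟩ := Sigma.mk.inj_iff.1 e
    have := congrArg Fin.val (eq_of_heq e2)
    simp only at this
    have := Fin.ext this
    subst this
    rfl)
  rw [Fintype.card_sigma] at h
  simp only [Fintype.card_fin] at h
  have := sum_fin_val r
  omega

lemma card_PL (r : ℕ) : Fintype.card (PL r) ≤ (3 * r + 4 - 1) * (3 * r + 4 - 2) / 6 := by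
  have h := card_pairs r
  simp only [Fintype.card_sum, Fintype.card_prod, Fintype.card_unit, Fintype.card_fin]
  have h1 : 3 * r + 4 - 1 = 3 * r + 3 := by omega
  have h2 : 3 * r + 4 - 2 = 3 * r + 2 := by omega
  rw [h1, h2, Nat.le_div_iff_mul_le (by norm_num)]
  nlinarith

lemma card_PO (r : ℕ) : Fintype.card (PO r) ≤ (4 * (3 * r + 4) + 2) / 3 := by
  simp only [Fintype.card_sum, Fintype.card_prod, Fintype.card_fin]
  omega

lemma exists_surj {β : Type} [Fintype β] [Nonempty β] {N : ℕ} (h : Fintype.card β ≤ N) :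
    ∃ f : Fin N → β, Function.Surjective f := by
  have e : Nonempty (β ↪ Fin N) := Function.Embedding.nonempty_of_card_le (by simpa using h)
  obtain ⟨e⟩ := e
  exact ⟨Function.invFun e, Function.invFun_surjective e.injective⟩

/-- The coordinates of `L`. -/
abbrev incl {r : ℕ} : Unit ⊕ (Fin r × Fin 3) → Idx r :=
  Sum.elim (fun _ => ixO) fun m => .inr (.inr m)

lemma incl_inj {r : ℕ} : Function.Injective (incl (r := r)) := by
  rintro (_ | m) (_ | m') h <;> simp_all [incl]

lemma emb_injective {κ ι : Type} [Fintype κ] [DecidableEq κ] [DecidableEq ι] {g : κ → ι}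
    (hg : Function.Injective g) (w : κ → ℂ) (m : κ) : emb g w (g m) = w m := by
  simp [emb, hg.eq_iff]

lemma emb_notMem {κ ι : Type} [Fintype κ] [DecidableEq ι] {g : κ → ι} {i : ι}
    (hi : i ∉ Set.range g) (w : κ → ℂ) : emb g w i = 0 := by
  refine Finset.sum_eq_zero fun m _ => if_neg fun h => hi ⟨m, h⟩

lemma range_incl {r : ℕ} {b : Fin 4} : (ixU b : Idx r) ∉ Set.range (incl (r := r)) := by
  rintro ⟨_ | m, h⟩ <;> simp [incl] at h

lemma ptsL_ixU {r : ℕ} (t : Par r → ℂ) (s : PL r) (b : Fin 4) : ptsL t s (ixU b) = 0 := by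
  rcases s with _ | m | m
  · refine emb_notMem (g := (![ixO] : Fin 1 → Idx r)) ?_ ![1]
    rintro ⟨m, h⟩
    fin_cases m
    simp at h
  · refine emb_notMem (g := e4 m.1) ?_ (pts4 m.2)
    rintro ⟨m, h⟩
    fin_cases m <;> simp [e4] at h
  · refine emb_notMem (g := e7 m.1.1.1 m.1.1.2) ?_ (parW t m.1.1.1 m.1.1.2 m.2)
    rintro ⟨m, h⟩
    fin_cases m <;> simp [e7] at h

/-- A point with zero `U` coordinates lies in the span of the coordinate vectors of `L`. -/
lemma emb_incl {r : ℕ} {v : Idx r → ℂ} (hv : ∀ b, v (ixU b) = 0) :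
    emb incl (fun m => v (incl m)) = v := by
  funext i
  rcases i with _ | b | m
  · exact emb_injective incl_inj _ (.inl ())
  · rw [hv]; exact emb_notMem range_incl _
  · exact emb_injective incl_inj _ (.inr m)

lemma emb_equiv {κ κ' ι : Type} [Fintype κ] [Fintype κ'] [DecidableEq ι] (e : κ' ≃ κ) (g : κ → ι)
    (w : κ → ℂ) : emb (g ∘ e) (w ∘ e) = emb g w := by
  funext i
  exact e.sum_comp fun m => if g m = i then w m else 0

theorem cubics_codim4_empty (n : ℕ) (hn : 7 ≤ n) (h3 : n % 3 = 1) :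
    Generic
      (ι := (Fin (n + 1) × Fin (n - 3)) ⊕ (Fin ((n - 1) * (n - 2) / 6) × Fin (n - 3)) ⊕
        (Fin ((4 * n + 2) / 3) × Fin (n + 1))) fun t =>
      let A : Matrix (Fin (n + 1)) (Fin (n - 3)) ℂ := Matrix.of fun i j => t (Sum.inl (i, j))
      let l : Fin ((n - 1) * (n - 2) / 6) → Fin (n + 1) → ℂ :=
        fun s => A.mulVec fun j => t (Sum.inr (Sum.inl (s, j)))
      let p : Fin ((4 * n + 2) / 3) → Fin (n + 1) → ℂ := fun k i => t (Sum.inr (Sum.inr (k, i)))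
      Function.Injective A.mulVec ∧
      ∀ f : MvPolynomial (Fin (n + 1)) ℂ, f.IsHomogeneous 3 →
        (∀ s, SingularAt f (l s)) → (∀ k, SingularAt f (p k)) → f = 0 := by
  obtain ⟨r, rfl⟩ : ∃ r, n = 3 * r + 4 := ⟨(n - 4) / 3, by omega⟩
  have hr : 0 < r := by omega
  obtain ⟨t, ht⟩ := exists_sys (⟨0, hr⟩ : Fin r)
  obtain ⟨φ, hφ⟩ := exists_surj (card_PL r)
  have : Nonempty (PO r) := ⟨.inr 0⟩
  obtain ⟨ψ, hψ⟩ := exists_surj (card_PO r)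
  let eI : Idx r ≃ Fin (3 * r + 4 + 1) := Fintype.equivFinOfCardEq (by
    simp only [Fintype.card_sum, Fintype.card_prod, Fintype.card_unit, Fintype.card_fin]; omega)
  let eL : Fin (3 * r + 4 - 3) ≃ Unit ⊕ (Fin r × Fin 3) := (Fintype.equivFinOfCardEq (by
    simp only [Fintype.card_sum, Fintype.card_prod, Fintype.card_unit, Fintype.card_fin]
    omega)).symm
  let g : Fin (3 * r + 4 - 3) → Fin (3 * r + 4 + 1) := eI ∘ incl ∘ eL
  have hg : Function.Injective g := eI.injective.comp (incl_inj.comp eL.injective)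
  -- The columns of `A` are the coordinate vectors of `L`, and the points are the special ones;
  -- `φ` and `ψ` enumerate them.
  let t₀ : (Fin (3 * r + 4 + 1) × Fin (3 * r + 4 - 3)) ⊕
      (Fin ((3 * r + 4 - 1) * (3 * r + 4 - 2) / 6) × Fin (3 * r + 4 - 3)) ⊕
        (Fin ((4 * (3 * r + 4) + 2) / 3) × Fin (3 * r + 4 + 1)) → ℂ :=
    Sum.elim (fun m => if g m.2 = m.1 then 1 else 0)
      (Sum.elim (fun m => ptsL t (φ m.1) (incl (eL m.2)))
        fun m => ptsO ⟨0, hr⟩ t (ψ m.1) (eI.symm m.2))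
  have hA₀ : ∀ x i, ∑ j, t₀ (.inl (i, j)) * x j = emb g x i := fun x i => by
    simp [t₀, emb]
  -- Full column rank and vanishing of all cubics are both generic, as they hold at `t₀`.
  have hinj := generic_lin (f := fun i t x => ∑ j, x j * t (Sum.inl (i, j)))
    (fun i => PolyLin.sum fun j => (PolyLin.coord j).mul (PolyFn.var _)) t₀ fun x hx => by
      funext j
      rw [← emb_injective hg x j, ← hA₀, Pi.zero_apply, ← hx (g j)]
      exact Finset.sum_congr rfl fun _ _ => mul_comm _ _
  have hsys := generic_sys (zero := fun _ _ _ => False)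
    (pts := fun t => Sum.elim
      (fun s i => ∑ j, t (Sum.inl (i, j)) * t (Sum.inr (Sum.inl (s, j))))
      fun k i => t (Sum.inr (Sum.inr (k, i)))) (by
        rintro (s | k) i
        · exact PolyFn.sum fun j => (PolyFn.var _).mul (PolyFn.var _)
        · exact PolyFn.var _) t₀ (by
      intro c hc _ hD
      have key := Sys.pull ht eI hc (fun _ _ _ h => h.elim) (by
        rintro (s | s) k
        · obtain ⟨s, rfl⟩ := hφ s
          rw [← hD (.inl s) k]
          congr 1
          funext i
          simp only [Sum.elim_inl, hA₀]
          have h1 : emb (eI ∘ incl) (fun m => ptsL t (φ s) (incl m)) = emb eI (ptsL t (φ s)) := by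
            rw [← emb_emb, emb_incl (ptsL_ixU t (φ s))]
          rw [← emb_equiv eL] at h1
          exact (congrFun h1 i).symm
        · obtain ⟨s, rfl⟩ := hψ s
          rw [← hD (.inr s) k]
          congr 1
          funext i
          obtain ⟨i, rfl⟩ := eI.surjective i
          simp [emb_injective eI.injective, t₀, ptsA])
      intro i j k
      simpa using key (eI.symm i) (eI.symm j) (eI.symm k))
  refine (hinj.and hsys).mono fun t h => ⟨?_, fun f hf hl hp => ?_⟩
  · intro x y hxy
    refine sub_eq_zero.1 (h.1 (x - y) fun i => ?_)
    have := congrFun hxy i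
    simp only [Matrix.mulVec, dotProduct, Matrix.of_apply] at this
    simp only [Pi.sub_apply, sub_mul, Finset.sum_sub_distrib, sub_eq_zero]
    simpa only [mul_comm] using this
  · refine cubic_eq_zero h.2 f hf ?_
    rintro (s | k) i
    · exact hl s i
    · exact hp k i
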